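/- Let G be the bipartite graph with vertex set {1,…,7} and edge set {{1,2},{2,3},{2,5},{3,4},{4,5},{3,6},{5,6},{6,7}}. Then 𝒞(G) = {∅, {2}, {6}, {2,6}, {3,5}, {2,4,6}}, the ideal J_G is unmixed of deviation 2 with dim S/J_G = 8 and depth S/J_G = 7; in particular S/J_G is not Cohen–Macaulay. -/

import Mathlib

open MvPolynomial

noncomputable section

/-- The binomial edge ideal of a simple graph `G` on vertex type `V`, inside the
polynomial ring `K[x_i, y_i : i ∈ V]`, modelled as `MvPolynomial (V ⊕ V) K`
with `x_i = X (Sum.inl i)` and `y_i = X (Sum.inr i)`. -/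
def binomialEdgeIdeal (K : Type*) [Field K] {V : Type*} (G : SimpleGraph V) :
    Ideal (MvPolynomial (V ⊕ V) K) :=
  Ideal.span { f | ∃ i j : V, G.Adj i j ∧
    f = X (Sum.inl i) * X (Sum.inr j) - X (Sum.inl j) * X (Sum.inr i) }

/-- The minimal number of generators of an ideal. -/
def mu {R : Type*} [CommRing R] (J : Ideal R) : ℕ :=
  sInf {k | ∃ s : Finset R, s.card = k ∧ Ideal.span (s : Set R) = J}

/-- The height of an ideal: the infimum of the heights of the primes containing it. -/
def htI {R : Type*} [CommRing R] (I : Ideal R) : ℕ∞ :=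
  ⨅ (P : PrimeSpectrum R) (_ : I ≤ P.asIdeal), Order.height P

/-- An ideal is unmixed if all of its minimal primes have height equal to its height. -/
def IsUnmixed {R : Type*} [CommRing R] (I : Ideal R) : Prop :=
  ∀ P ∈ I.minimalPrimes, htI P = htI I

/-- The depth of a ring `R` with respect to an ideal `m`: the supremum of the
lengths of regular sequences on `R` consisting of elements of `m`. -/
def ringDepth (R : Type*) [CommRing R] (m : Ideal R) : ℕ∞ :=
  sSup {d : ℕ∞ | ∃ l : List R, (l.length : ℕ∞) = d ∧ (∀ x ∈ l, x ∈ m) ∧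
    RingTheory.Sequence.IsRegular R l}

/-- The graded maximal ideal of the quotient of a polynomial ring by an ideal `J`:
the image of the ideal generated by all the variables. -/
def gradedMaxQuot {K σ : Type*} [Field K] (J : Ideal (MvPolynomial σ K)) :
    Ideal (MvPolynomial σ K ⧸ J) :=
  (Ideal.span (Set.range (X : σ → MvPolynomial σ K))).map (Ideal.Quotient.mk J)

/-- `S/J` is Cohen–Macaulay: its depth with respect to the graded maximal ideal
equals its Krull dimension. -/
def IsCMQuot {K σ : Type*} [Field K] (J : Ideal (MvPolynomial σ K)) : Prop :=
  (ringDepth (MvPolynomial σ K ⧸ J) (gradedMaxQuot J) : WithBot ℕ∞) =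
    ringKrullDim (MvPolynomial σ K ⧸ J)

/-- A graph is a path graph if its vertices can be ordered `v_1, …, v_m` so that
its edges are exactly `{v_i, v_{i+1}}` for `1 ≤ i ≤ m - 1`. -/
def IsPathGraph {V : Type*} (H : SimpleGraph V) : Prop :=
  ∃ (m : ℕ) (e : V ≃ Fin m), ∀ a b : V,
    H.Adj a b ↔ ((e a : ℕ) + 1 = (e b : ℕ) ∨ (e b : ℕ) + 1 = (e a : ℕ))

/-- The vertex set of a connected component, as a set of vertices. -/
def compSupp {V : Type*} (G : SimpleGraph V) (c : G.ConnectedComponent) : Set V :=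
  {v | G.connectedComponentMk v = c}

end

noncomputable section

/-- The prime `P_T(G)` associated with a subset `T` of the vertices: it is generated
by the variables `x_i, y_i` for `i ∈ T` together with the binomial edge ideals of the
complete graphs on the connected components of the subgraph of `G` induced on the
complement of `T` (i.e. all `2`-minors `x_i y_j - x_j y_i` for distinct vertices
`i, j ∉ T` lying in the same connected component of that induced subgraph). -/
def PTIdeal (K : Type*) [Field K] {n : ℕ} (G : SimpleGraph (Fin n)) (T : Set (Fin n)) :
    Ideal (MvPolynomial (Fin n ⊕ Fin n) K) :=
  Ideal.span
    ({ f | ∃ i ∈ T, f = X (Sum.inl i) } ∪ { f | ∃ i ∈ T, f = X (Sum.inr i) } ∪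
      { f | ∃ (i j : Fin n) (hi : i ∈ Tᶜ) (hj : j ∈ Tᶜ), i ≠ j ∧
        (G.induce Tᶜ).Reachable ⟨i, hi⟩ ⟨j, hj⟩ ∧
        f = X (Sum.inl i) * X (Sum.inr j) - X (Sum.inl j) * X (Sum.inr i) })

/-- The number of connected components of the subgraph of `G` induced on `U`. -/
def cNum {n : ℕ} (G : SimpleGraph (Fin n)) (U : Set (Fin n)) : ℕ :=
  Nat.card (G.induce U).ConnectedComponent

/-- `T` has the cutpoint property for `G`: every `i ∈ T` is a cutpoint of the
subgraph of `G` induced on `([n] ∖ T) ∪ {i}`, i.e. removing `i` from that graph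
increases the number of connected components. -/
def HasCutpointProperty {n : ℕ} (G : SimpleGraph (Fin n)) (T : Set (Fin n)) : Prop :=
  ∀ i ∈ T, cNum G (Tᶜ ∪ {i}) < cNum G Tᶜ

/-- The bipartite graph with vertex set `{1,…,7}` (modelled as `Fin 7`, vertex `i`
corresponding to `i - 1`) and edge set
`{{1,2},{2,3},{2,5},{3,4},{4,5},{3,6},{5,6},{6,7}}`. -/
def bipartiteExample : SimpleGraph (Fin 7) :=
  SimpleGraph.fromRel (fun a b =>
    (a, b) ∈ ([(0, 1), (1, 2), (1, 4), (2, 3), (3, 4), (2, 5), (4, 5), (5, 6)] :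
      List (Fin 7 × Fin 7)))

/-!
Each `P_T` is generated by the variables of `T` and the `2`-minors of a matrix whose columns are
grouped into blocks, so it is the kernel of a monomial map, hence prime, and it is Cohen–Macaulay.
By the Plücker relations, the ideal `J_G` of the graph is the intersection of `P_{3,5}` with the
ideal `J_H` of the graph `H` obtained by adding the triangle on `{2, 4, 6}`. In the same way `J_H`
is the intersection of `P_{2,4,6}` with the ideal of the complete graph on `{2, …, 6}` with two
pendant edges. The minors of the pendant edges form a regular sequence, and thus `S/J_H` is
Cohen–Macaulay of dimension `8`. The sum `J_H + P_{3,5}` again comes from a graph with two pendant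
edges, and its quotient is Cohen–Macaulay of dimension `6`. The Mayer–Vietoris sequence then gives
depth `7`. Splitting off the pendant edges in turn exhibits `J_G` as the intersection of the six
primes `P_T` for `T ∈ 𝒞(G)`, all of height `6`. Finally, the `8` minors of the edges are linearly
independent quadrics, so they generate `J_G` minimally.

The depth bounds are phrased as the vanishing of `Ext`, which passes along short exact sequences.
-/

section ExtVanishing

open CategoryTheory Abelian Pointwise

universe u v

/-- The modules `Ext i (R ⧸ m) M` vanish for all `i < n`. For a finite module `M ≠ m M` over a
Noetherian ring this says that the depth of `M` with respect to `m` is at least `n`. The quotient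
`R ⧸ m` is shrunk in order to live in the universe of `M`. -/
def ExtVanish {R : Type u} [CommRing R] [Small.{v} R] (m : Ideal R) (M : Type v) [AddCommGroup M]
    [Module R M] (n : ℕ) : Prop :=
  ∀ i < n, Subsingleton (Ext (ModuleCat.of R (Shrink.{v} (R ⧸ m))) (ModuleCat.of R M) i)

namespace ExtVanish

variable {R : Type u} [CommRing R] [Small.{v} R] {m : Ideal R} {L M N : Type v}
  [AddCommGroup L] [Module R L] [AddCommGroup M] [Module R M] [AddCommGroup N] [Module R N]
  {f : L →ₗ[R] M} {g : M →ₗ[R] N} {k n : ℕ}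

lemma mono (h : ExtVanish m M n) (hk : k ≤ n) : ExtVanish m M k :=
  fun i hi => h i (hi.trans_le hk)

lemma zero : ExtVanish m M 0 := fun _ hi => absurd hi (Nat.not_lt_zero _)

lemma left (hf : Function.Injective f) (hfg : Function.Exact f g) (hg : Function.Surjective g)
    (hM : ExtVanish m M (n + 1)) (hN : ExtVanish m N n) : ExtVanish m L (n + 1) := by
  intro i hi
  have hS := ModuleCat.shortComplex_shortExact
    (ModuleCat.shortComplexOfCompEqZero f g hfg.linearMap_comp_eq_zero) hfg hf hg
  have := hM i hi
  refine subsingleton_of_forall_eq 0 fun x => ?_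
  rcases i with _ | i
  · have : Mono (ModuleCat.ofHom f) := hS.mono_f
    exact Ext.postcomp_mk₀_injective_of_mono _ (ModuleCat.ofHom f) (Subsingleton.elim _ _)
  · have := hN i (by lia)
    obtain ⟨y, rfl⟩ := Ext.covariant_sequence_exact₁ _ hS x (Subsingleton.elim _ _) rfl
    rw [Subsingleton.elim y 0, Ext.zero_comp]

lemma middle (hf : Function.Injective f) (hfg : Function.Exact f g) (hg : Function.Surjective g)
    (hL : ExtVanish m L n) (hN : ExtVanish m N n) : ExtVanish m M n := by
  intro i hi
  have hS := ModuleCat.shortComplex_shortExact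
    (ModuleCat.shortComplexOfCompEqZero f g hfg.linearMap_comp_eq_zero) hfg hf hg
  have := hL i hi
  have := hN i hi
  refine subsingleton_of_forall_eq 0 fun x => ?_
  obtain ⟨y, rfl⟩ := Ext.covariant_sequence_exact₂ _ hS x (Subsingleton.elim _ _)
  rw [Subsingleton.elim y 0, Ext.zero_comp]

lemma right (hf : Function.Injective f) (hfg : Function.Exact f g) (hg : Function.Surjective g)
    (hL : ExtVanish m L (n + 1)) (hM : ExtVanish m M n) : ExtVanish m N n := by
  intro i hi
  have hS := ModuleCat.shortComplex_shortExact
    (ModuleCat.shortComplexOfCompEqZero f g hfg.linearMap_comp_eq_zero) hfg hf hg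
  have := hL (i + 1) (by lia)
  have := hM i hi
  refine subsingleton_of_forall_eq 0 fun x => ?_
  obtain ⟨y, rfl⟩ := Ext.covariant_sequence_exact₃ _ hS x rfl (Subsingleton.elim _ _)
  rw [Subsingleton.elim y 0, Ext.zero_comp]

lemma prod (hL : ExtVanish m L n) (hM : ExtVanish m M n) : ExtVanish m (L × M) n :=
  middle (f := LinearMap.inl R L M) (g := LinearMap.snd R L M) LinearMap.inl_injective
    .inl_snd Prod.snd_surjective hL hM

lemma congr (e : M ≃ₗ[R] N) (hM : ExtVanish m M n) : ExtVanish m N n := fun i hi =>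
  let X := ModuleCat.of R (Shrink.{v} (R ⧸ m))
  have : Subsingleton ((extFunctorObj X i).obj (ModuleCat.of R M)) := hM i hi
  ((extFunctorObj X i).mapIso e.toModuleIso).addCommGroupIsoToAddEquiv.symm.toEquiv.subsingleton

lemma quotSMulTop {x : R} (hx : IsSMulRegular M x) (hM : ExtVanish m M (n + 1)) :
    ExtVanish m (QuotSMulTop x M) n :=
  right (f := LinearMap.lsmul R M x) hx (LinearMap.exact_lsmul_mkQ_smul_top M x)
    (Submodule.mkQ_surjective _) hM (hM.mono n.le_succ)

/- Since `x` kills `R ⧸ m`, multiplication by `x` is zero on `Ext i (R ⧸ m) M`. -/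
lemma succ_of_quotSMulTop {x : R} (hxm : x ∈ m) (hx : IsSMulRegular M x)
    (h : ExtVanish m (QuotSMulTop x M) n) : ExtVanish m M (n + 1) := by
  intro i hi
  have hS := hx.smulShortComplex_shortExact (M := ModuleCat.of R M)
  have hann : x ∈ Module.annihilator R (Shrink.{v} (R ⧸ m)) := by
    rwa [(Shrink.linearEquiv R (R ⧸ m)).annihilator_eq, Ideal.annihilator_quotient]
  have hzero (y : Ext (ModuleCat.of R (Shrink.{v} (R ⧸ m))) (ModuleCat.of R M) i) :
      y.comp (Ext.mk₀ (x • 𝟙 (ModuleCat.of R M))) (add_zero i) = 0 :=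
    congr($(Ext.postcomp_smul_id_eq_zero_of_mem_annihilator
      (N := ModuleCat.of R (Shrink.{v} (R ⧸ m))) (M := ModuleCat.of R M) hann i) y)
  refine subsingleton_of_forall_eq 0 fun y => ?_
  rcases i with _ | i
  · have : Mono (x • 𝟙 (ModuleCat.of R M)) := hS.mono_f
    exact Ext.postcomp_mk₀_injective_of_mono _ _ ((hzero y).trans (map_zero _).symm)
  · obtain ⟨z, rfl⟩ := Ext.covariant_sequence_exact₁ _ hS y (hzero y) rfl
    obtain rfl : z = 0 := (h i (by lia)).elim z 0
    exact Ext.zero_comp _ _ hS.extClass _ rfl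

end ExtVanish

lemma length_le_supportDim_of_isRegular {R M : Type*} [CommRing R] [AddCommGroup M] [Module R M]
    [Module.Finite R M] {rs : List R} (h : RingTheory.Sequence.IsRegular M rs) :
    (rs.length : WithBot ℕ∞) ≤ Module.supportDim R M := by
  induction rs generalizing M with
  | nil =>
    have := h.nontrivial
    have := Module.nonempty_support_of_nontrivial (R := R) (M := M) |>.to_subtype
    simpa [Module.supportDim] using Order.krullDim_nonneg (α := Module.support R M)
  | cons x rs ih =>
    obtain ⟨hx, hrs⟩ := (RingTheory.Sequence.isRegular_cons_iff _ _ _).1 h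
    calc ((x :: rs).length : WithBot ℕ∞) = rs.length + 1 := by simp
      _ ≤ Module.supportDim R (QuotSMulTop x M) + 1 := by gcongr; exact ih hrs
      _ ≤ Module.supportDim R M := Module.supportDim_quotSMulTop_succ_le_of_notMem_minimalPrimes
        fun _ => hx.notMem_of_mem_minimalPrimes

section Noetherian

variable {R : Type u} [CommRing R] [Small.{v} R] [IsNoetherianRing R] {m : Ideal R} {M : Type v}
  [AddCommGroup M] [Module R M] [Module.Finite R M] {n : ℕ}

lemma extVanish_iff_exists_isRegular (hm : m • (⊤ : Submodule R M) < ⊤) :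
    ExtVanish m M n ↔ ∃ rs : List R, rs.length = n ∧ (∀ r ∈ rs, r ∈ m) ∧
      RingTheory.Sequence.IsRegular M rs :=
  (ModuleCat.exists_isRegular_tfae m n (ModuleCat.of R M) hm).out 1 3

lemma ExtVanish.le_supportDim (h : ExtVanish m M n) (hm : m • (⊤ : Submodule R M) < ⊤) :
    (n : WithBot ℕ∞) ≤ Module.supportDim R M := by
  obtain ⟨rs, rfl, -, hrs⟩ := (extVanish_iff_exists_isRegular hm).1 h
  exact length_le_supportDim_of_isRegular hrs

end Noetherian

end ExtVanishing

section QuotientDepth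

variable {R : Type*} [CommRing R] {m I J : Ideal R} {n : ℕ}

lemma isRegular_quotient_map_mk_iff {rs : List R} :
    RingTheory.Sequence.IsRegular (R ⧸ I) (rs.map (Ideal.Quotient.mk I)) ↔
      RingTheory.Sequence.IsRegular (R ⧸ I) rs :=
  (AddEquiv.refl (R ⧸ I)).isRegular_congr <| List.forall₂_map_left_iff.mpr <|
    List.forall₂_same.mpr fun r _ => algebraMap_smul (R ⧸ I) r

lemma smul_top_quotient_lt_top (hI : I ≤ m) (hm : m ≠ ⊤) :
    m • (⊤ : Submodule R (R ⧸ I)) < ⊤ := by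
  rw [Ideal.smul_top_eq_map, lt_top_iff_ne_top, ne_eq, Submodule.restrictScalars_eq_top_iff]
  intro h
  rw [← Ideal.comap_map_mk hI, ← Ideal.Quotient.algebraMap_eq, h, Ideal.comap_top] at hm
  exact hm rfl

lemma ringDepth_quotient_eq [IsNoetherianRing R] (hI : I ≤ m) (hm : m ≠ ⊤)
    (h : ExtVanish m (R ⧸ I) n) (h' : ¬ ExtVanish m (R ⧸ I) (n + 1)) :
    ringDepth (R ⧸ I) (m.map (Ideal.Quotient.mk I)) = n := by
  have hlt := smul_top_quotient_lt_top hI hm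
  refine le_antisymm (sSup_le ?_) (le_sSup ?_)
  · rintro _ ⟨l, rfl, hl, hreg⟩
    obtain ⟨rs, rfl⟩ : l ∈ Set.range (List.map (Ideal.Quotient.mk I ∘ ((↑) : m → R))) := by
      rw [Set.range_list_map]
      intro x hx
      obtain ⟨r, hr, rfl⟩ := (Ideal.mem_map_iff_of_surjective _
        Ideal.Quotient.mk_surjective).1 (hl x hx)
      exact ⟨⟨r, hr⟩, rfl⟩
    rw [← List.map_map, isRegular_quotient_map_mk_iff] at hreg
    rw [List.length_map, Nat.cast_le]
    by_contra! hn
    exact h' (((extVanish_iff_exists_isRegular hlt).2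
      ⟨_, List.length_map _, List.forall_mem_map.2 fun r _ => r.2, hreg⟩).mono hn)
  · obtain ⟨rs, rfl, hrs, hreg⟩ := (extVanish_iff_exists_isRegular hlt).1 h
    exact ⟨rs.map (Ideal.Quotient.mk I), by simp,
      List.forall_mem_map.2 fun r hr => Ideal.mem_map_of_mem _ (hrs r hr),
      isRegular_quotient_map_mk_iff.2 hreg⟩

/-- The quotient of `R ⧸ I` by `x` is the quotient of `R` by `I + (x)`. -/
def quotSMulTopQuotientEquiv (I : Ideal R) (x : R) :
    QuotSMulTop x (R ⧸ I) ≃ₗ[R] R ⧸ (I ⊔ Ideal.span {x}) :=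
  (Submodule.quotEquivOfEq _ _ (by
    rw [← Submodule.ideal_span_singleton_smul, ← Submodule.range_mkQ, LinearMap.range_eq_map,
      ← Submodule.map_smul'', smul_eq_mul, Ideal.mul_top])).trans
    (Submodule.quotientQuotientEquivQuotientSup I (Ideal.span {x}))

lemma ExtVanish.le_ringKrullDim_quotient [IsNoetherianRing R] (h : ExtVanish m (R ⧸ I) n)
    (hI : I ≤ m) (hm : m ≠ ⊤) : (n : WithBot ℕ∞) ≤ ringKrullDim (R ⧸ I) :=
  (h.le_supportDim (smul_top_quotient_lt_top hI hm)).trans_eq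
    (Module.supportDim_quotient_eq_ringKrullDim I)

lemma extVanish_sup_span_singleton_iff {x : R} (hxm : x ∈ m) (hx : IsSMulRegular (R ⧸ I) x) :
    ExtVanish m (R ⧸ (I ⊔ Ideal.span {x})) n ↔ ExtVanish m (R ⧸ I) (n + 1) :=
  ⟨fun h => (h.congr (quotSMulTopQuotientEquiv I x).symm).succ_of_quotSMulTop hxm hx,
    fun h => (h.quotSMulTop hx).congr (quotSMulTopQuotientEquiv I x)⟩

lemma exact_quotient_inf_sup (I J : Ideal R) :
    ∃ (f : (R ⧸ (I ⊓ J)) →ₗ[R] (R ⧸ I) × (R ⧸ J)) (g : (R ⧸ I) × (R ⧸ J) →ₗ[R] R ⧸ (I ⊔ J)),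
      Function.Injective f ∧ Function.Exact f g ∧ Function.Surjective g := by
  refine ⟨(Submodule.mapQ _ _ .id inf_le_left).prod (Submodule.mapQ _ _ .id inf_le_right),
    (Submodule.mapQ _ _ .id le_sup_left).coprod (-Submodule.mapQ _ _ .id le_sup_right), ?_, ?_, ?_⟩
  · rw [injective_iff_map_eq_zero]
    intro a ha
    obtain ⟨a, rfl⟩ := Submodule.Quotient.mk_surjective _ a
    have h1 : a ∈ I := (Submodule.Quotient.mk_eq_zero I).1 congr(($ha).1)
    have h2 : a ∈ J := (Submodule.Quotient.mk_eq_zero J).1 congr(($ha).2)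
    exact (Submodule.Quotient.mk_eq_zero _).2 ⟨h1, h2⟩
  · rintro ⟨a, b⟩
    obtain ⟨a, rfl⟩ := Submodule.Quotient.mk_surjective _ a
    obtain ⟨b, rfl⟩ := Submodule.Quotient.mk_surjective _ b
    constructor
    · intro h
      have h : a - b ∈ I ⊔ J := by
        rw [← Submodule.Quotient.mk_eq_zero, Submodule.Quotient.mk_sub, sub_eq_add_neg]
        simpa using h
      obtain ⟨i, hi, j, hj, hij⟩ := Submodule.mem_sup.1 h
      refine ⟨Submodule.Quotient.mk (a - i), Prod.ext ?_ ?_⟩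
      · exact (Submodule.Quotient.eq I).2 (by simpa using hi)
      · have : a - i - b = j := by linear_combination -hij
        exact (Submodule.Quotient.eq J).2 (by simpa [this] using hj)
    · rintro ⟨c, hc⟩
      obtain ⟨c, rfl⟩ := Submodule.Quotient.mk_surjective _ c
      rw [← hc]
      simp
  · intro a
    obtain ⟨a, rfl⟩ := Submodule.Quotient.mk_surjective _ a
    exact ⟨(Submodule.Quotient.mk a, 0), by simp⟩

lemma ExtVanish.inf (hI : ExtVanish m (R ⧸ I) (n + 1)) (hJ : ExtVanish m (R ⧸ J) (n + 1))
    (hsup : ExtVanish m (R ⧸ (I ⊔ J)) n) : ExtVanish m (R ⧸ (I ⊓ J)) (n + 1) := by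
  obtain ⟨f, g, hf, hfg, hg⟩ := exact_quotient_inf_sup I J
  exact left hf hfg hg (hI.prod hJ) hsup

lemma ExtVanish.sup (hinf : ExtVanish m (R ⧸ (I ⊓ J)) (n + 1)) (hI : ExtVanish m (R ⧸ I) n)
    (hJ : ExtVanish m (R ⧸ J) n) : ExtVanish m (R ⧸ (I ⊔ J)) n := by
  obtain ⟨f, g, hf, hfg, hg⟩ := exact_quotient_inf_sup I J
  exact right hf hfg hg hinf (hI.prod hJ)

lemma isSMulRegular_quotient_of_isPrime [hI : I.IsPrime] {x : R} (hx : x ∉ I) :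
    IsSMulRegular (R ⧸ I) x :=
  (isSMulRegular_quotient_iff_mem_of_smul_mem I x).2 fun _ h => (hI.mem_or_mem h).resolve_left hx

lemma isSMulRegular_quotient_inf {x : R} (hI : IsSMulRegular (R ⧸ I) x)
    (hJ : IsSMulRegular (R ⧸ J) x) : IsSMulRegular (R ⧸ (I ⊓ J)) x := by
  simp only [isSMulRegular_quotient_iff_mem_of_smul_mem] at *
  exact fun y hy => ⟨hI y hy.1, hJ y hy.2⟩

end QuotientDepth

section KillVariables

variable {R σ : Type*} [CommRing R]

lemma idealOfVars_ne_top [Nontrivial R] : idealOfVars σ R ≠ ⊤ := by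
  have hle : idealOfVars σ R ≤ RingHom.ker (constantCoeff (σ := σ) (R := R)) := by
    refine Ideal.span_le.2 ?_
    rintro _ ⟨a, rfl⟩
    simp
  exact ne_top_of_le_ne_top (RingHom.ker_ne_top _) hle

lemma X_mem_idealOfVars (a : σ) : (X a : MvPolynomial σ R) ∈ idealOfVars σ R :=
  Ideal.subset_span ⟨a, rfl⟩

variable [DecidableEq σ] {B : Finset σ} {J : Ideal (MvPolynomial σ R)}

/-- The endomorphism of the polynomial ring setting the variables in `B` to zero. -/
def kill (R : Type*) [CommRing R] {σ : Type*} [DecidableEq σ] (B : Finset σ) :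
    MvPolynomial σ R →ₐ[R] MvPolynomial σ R :=
  aeval fun a => if a ∈ B then 0 else X a

lemma kill_X_of_mem {a : σ} (h : a ∈ B) : kill R B (X a) = 0 := by simp [kill, h]

lemma kill_X_of_notMem {a : σ} (h : a ∉ B) : kill R B (X a) = X a := by simp [kill, h]

lemma sub_kill_mem (hJ : ∀ a ∈ B, X a ∈ J) (p : MvPolynomial σ R) : p - kill R B p ∈ J := by
  have h : Ideal.Quotient.mkₐ R J = (Ideal.Quotient.mkₐ R J).comp (kill R B) := by
    refine MvPolynomial.algHom_ext fun a => ?_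
    by_cases ha : a ∈ B
    · rw [AlgHom.comp_apply, kill_X_of_mem ha, map_zero]
      exact Ideal.Quotient.eq_zero_iff_mem.2 (hJ a ha)
    · rw [AlgHom.comp_apply, kill_X_of_notMem ha]
  exact (Ideal.Quotient.mk_eq_mk_iff_sub_mem _ _).1 congr($h p)

lemma sub_kill_mem_of_mem_span {F : Set (MvPolynomial σ R)} (hF : ∀ f ∈ F, kill R B f = f)
    (hBF : ∀ a ∈ B, ∀ f ∈ F, X a * f ∈ J) {g : MvPolynomial σ R} (hg : g ∈ Ideal.span F) :
    g - kill R B g ∈ J := by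
  induction hg using Submodule.span_induction with
  | mem f hf => simp [hF f hf]
  | zero => simp
  | add x y _ _ hx hy => rw [map_add, add_sub_add_comm]; exact add_mem hx hy
  | smul c x hx hx' =>
    have hc : (c - kill R B c) * x ∈ J := by
      have hmul := Ideal.mul_mem_mul (sub_kill_mem (J := Ideal.span (X '' (B : Set σ)))
        (fun a ha => Ideal.subset_span (Set.mem_image_of_mem X ha)) c) hx
      rw [Ideal.span_mul_span'] at hmul
      refine Ideal.span_le.2 ?_ hmul
      rintro _ ⟨_, ⟨a, ha, rfl⟩, f, hf, rfl⟩
      exact hBF a ha f hf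
    have hsplit : c • x - kill R B (c • x) =
        (c - kill R B c) * x + kill R B c * (x - kill R B x) := by
      rw [smul_eq_mul, map_mul]; ring
    rw [hsplit]
    exact add_mem hc (J.mul_mem_left _ hx')

lemma eq_inf_of_kill {F : Set (MvPolynomial σ R)} (hJ : J ≤ J.comap (kill R B))
    (hF : ∀ f ∈ F, kill R B f = f) (hBF : ∀ a ∈ B, ∀ f ∈ F, X a * f ∈ J) :
    J = (J ⊔ Ideal.span F) ⊓ (J ⊔ Ideal.span (X '' (B : Set σ))) := by
  refine le_antisymm (le_inf le_sup_left le_sup_left) ?_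
  rintro p ⟨hpF, hpB⟩
  have hkill : kill R B p ∈ J := by
    suffices J ⊔ Ideal.span (X '' (B : Set σ)) ≤ J.comap (kill R B) from this hpB
    refine sup_le hJ (Ideal.span_le.2 ?_)
    rintro _ ⟨a, ha, rfl⟩
    simp [kill_X_of_mem (Finset.mem_coe.1 ha)]
  obtain ⟨u, hu, g, hg, rfl⟩ := Submodule.mem_sup.1 hpF
  have hsplit : u + g = (u - kill R B u) + (g - kill R B g) + kill R B (u + g) := by
    rw [map_add]; ring
  rw [hsplit]
  exact add_mem (add_mem (sub_mem hu (hJ hu)) (sub_kill_mem_of_mem_span hF hBF hg)) hkill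

end KillVariables

section MinorIdeal

variable {R V : Type*} [CommRing R]

/-- The `2`-minor `x_i y_j - x_j y_i` of the generic `2 × V` matrix. -/
def minor (R : Type*) [CommRing R] {V : Type*} (i j : V) : MvPolynomial (V ⊕ V) R :=
  X (.inl i) * X (.inr j) - X (.inl j) * X (.inr i)

/-- The ideal generated by the variables in `A` and the `2`-minors of the pairs related by `r`. -/
def minorIdeal (R : Type*) [CommRing R] {V : Type*} (A : Finset (V ⊕ V)) (r : V → V → Prop) :
    Ideal (MvPolynomial (V ⊕ V) R) :=
  Ideal.span ({f | ∃ a ∈ A, X a = f} ∪ {f | ∃ i j, r i j ∧ minor R i j = f})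

lemma minor_self (i : V) : minor R i i = 0 := by simp [minor]

lemma minor_swap (i j : V) : minor R j i = -minor R i j := by simp [minor]

variable {A A' : Finset (V ⊕ V)} {r r' : V → V → Prop}

lemma X_mem_minorIdeal {a : V ⊕ V} (h : a ∈ A) : X a ∈ minorIdeal R A r :=
  Ideal.subset_span (.inl ⟨a, h, rfl⟩)

lemma minor_mem_minorIdeal {i j : V} (h : r i j) : minor R i j ∈ minorIdeal R A r :=
  Ideal.subset_span (.inr ⟨i, j, h, rfl⟩)

lemma minorIdeal_le_iff {J : Ideal (MvPolynomial (V ⊕ V) R)} :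
    minorIdeal R A r ≤ J ↔ (∀ a ∈ A, X a ∈ J) ∧ ∀ i j, r i j → minor R i j ∈ J := by
  rw [minorIdeal, Ideal.span_le, Set.union_subset_iff]
  refine and_congr ⟨fun h a ha => h ⟨a, ha, rfl⟩, ?_⟩ ⟨fun h i j hij => h ⟨i, j, hij, rfl⟩, ?_⟩
  · rintro h _ ⟨a, ha, rfl⟩
    exact h a ha
  · rintro h _ ⟨i, j, hij, rfl⟩
    exact h i j hij

lemma minor_mem_idealOfVars (i j : V) : minor R i j ∈ idealOfVars (V ⊕ V) R :=
  sub_mem (Ideal.mul_mem_right _ _ (X_mem_idealOfVars _))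
    (Ideal.mul_mem_right _ _ (X_mem_idealOfVars _))

lemma minorIdeal_le_idealOfVars : minorIdeal R A r ≤ idealOfVars (V ⊕ V) R :=
  minorIdeal_le_iff.2 ⟨fun a _ => X_mem_idealOfVars a, fun i j _ => minor_mem_idealOfVars i j⟩

/-- A combinatorial sufficient condition for `minor R i j ∈ minorIdeal R A r`: up to order the
pair is related by `r`, or both terms of the minor are divisible by a variable in `A`. -/
def MinorCovered (A : Finset (V ⊕ V)) (r : V → V → Prop) (i j : V) : Prop :=
  i = j ∨ r i j ∨ r j i ∨
    ((.inl i ∈ A ∨ .inr j ∈ A) ∧ (.inl j ∈ A ∨ .inr i ∈ A))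

instance [DecidableEq V] (i j : V) [Decidable (r i j)] [Decidable (r j i)] :
    Decidable (MinorCovered A r i j) :=
  inferInstanceAs (Decidable (_ ∨ _ ∨ _ ∨ _))

lemma MinorCovered.mem {i j : V} (h : MinorCovered A r i j) :
    minor R i j ∈ minorIdeal R A r := by
  rcases h with rfl | h | h | ⟨h, h'⟩
  · rw [minor_self]
    exact zero_mem _
  · exact minor_mem_minorIdeal h
  · rw [minor_swap]
    exact neg_mem (minor_mem_minorIdeal h)
  · refine sub_mem ?_ ?_
    · exact h.elim (fun h => Ideal.mul_mem_right _ _ (X_mem_minorIdeal h))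
        (fun h => Ideal.mul_mem_left _ _ (X_mem_minorIdeal h))
    · exact h'.elim (fun h => Ideal.mul_mem_right _ _ (X_mem_minorIdeal h))
        (fun h => Ideal.mul_mem_left _ _ (X_mem_minorIdeal h))

lemma minorIdeal_mono (hA : A ⊆ A') (hr : ∀ i j, r i j → MinorCovered A' r' i j) :
    minorIdeal R A r ≤ minorIdeal R A' r' :=
  minorIdeal_le_iff.2 ⟨fun _ ha => X_mem_minorIdeal (hA ha), fun i j hij => (hr i j hij).mem⟩

lemma minorIdeal_congr (hr : ∀ i j, r i j → MinorCovered A r' i j)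
    (hr' : ∀ i j, r' i j → MinorCovered A r i j) : minorIdeal R A r = minorIdeal R A r' :=
  le_antisymm (minorIdeal_mono le_rfl hr) (minorIdeal_mono le_rfl hr')

/- Plücker relation: `x_v f_{ij} = x_i f_{vj} - x_j f_{vi}`, and likewise for `y_v`. -/
lemma X_mul_minor_mem_minorIdeal {v i j : V} (hi : MinorCovered A r v i)
    (hj : MinorCovered A r v j) {b : V ⊕ V} (hb : b = .inl v ∨ b = .inr v) :
    X b * minor R i j ∈ minorIdeal R A r := by
  obtain ⟨f, hf⟩ : ∃ f : V → V ⊕ V,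
      X b * minor R i j = X (f i) * minor R v j - X (f j) * minor R v i := by
    rcases hb with rfl | rfl
    · exact ⟨.inl, by simp only [minor]; ring⟩
    · exact ⟨.inr, by simp only [minor]; ring⟩
  rw [hf]
  exact sub_mem (Ideal.mul_mem_left _ _ hj.mem) (Ideal.mul_mem_left _ _ hi.mem)

lemma minorIdeal_sup [DecidableEq V] : minorIdeal R A r ⊔ minorIdeal R A' r' =
    minorIdeal R (A ∪ A') (fun i j => r i j ∨ r' i j) := by
  refine le_antisymm (sup_le (minorIdeal_mono Finset.subset_union_left fun _ _ h => ?_)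
    (minorIdeal_mono Finset.subset_union_right fun _ _ h => ?_))
    (minorIdeal_le_iff.2 ⟨fun a ha => ?_, fun i j h => ?_⟩)
  · exact .inr (.inl (.inl h))
  · exact .inr (.inl (.inr h))
  · exact (Finset.mem_union.1 ha).elim (fun h => Ideal.mem_sup_left (X_mem_minorIdeal h))
      (fun h => Ideal.mem_sup_right (X_mem_minorIdeal h))
  · exact h.elim (fun h => Ideal.mem_sup_left (minor_mem_minorIdeal h))
      (fun h => Ideal.mem_sup_right (minor_mem_minorIdeal h))

lemma minorIdeal_sup_span_X [DecidableEq V] (B : Finset (V ⊕ V)) :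
    minorIdeal R A r ⊔ Ideal.span (X '' (B : Set (V ⊕ V))) = minorIdeal R (A ∪ B) r := by
  have hB : Ideal.span (X '' (B : Set (V ⊕ V))) = minorIdeal R B (fun _ _ => False) := by
    simp [minorIdeal, Set.image]
  rw [hB, minorIdeal_sup]
  simp only [or_false]

lemma minorIdeal_sup_span_X_singleton [DecidableEq V] (a : V ⊕ V) :
    minorIdeal R A r ⊔ Ideal.span {X a} = minorIdeal R (insert a A) r := by
  simpa [Finset.union_comm] using minorIdeal_sup_span_X (R := R) (A := A) (r := r) {a}

lemma minorIdeal_sup_span_minor (k l : V) :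
    minorIdeal R A r ⊔ Ideal.span {minor R k l} =
      minorIdeal R A (fun i j => r i j ∨ i = k ∧ j = l) := by
  classical
  have hkl : Ideal.span {minor R k l} = minorIdeal R ∅ (fun i j => i = k ∧ j = l) := by
    simp [minorIdeal]
  rw [hkl, minorIdeal_sup, Finset.union_empty]

variable [DecidableEq V]

/-- The set `A` contains no variable of the vertex `i`. -/
def FreeAt (A : Finset (V ⊕ V)) (i : V) : Prop := .inl i ∉ A ∧ .inr i ∉ A

instance (i : V) : Decidable (FreeAt A i) := inferInstanceAs (Decidable (_ ∧ _))

/-- The set `A` contains both variables of the vertex `i` or none of them. -/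
def FullOrFree (A : Finset (V ⊕ V)) (i : V) : Prop := .inl i ∈ A ↔ .inr i ∈ A

lemma kill_minor_of_freeAt {i j : V} (hi : FreeAt A i) (hj : FreeAt A j) :
    kill R A (minor R i j) = minor R i j := by
  simp only [minor, map_sub, map_mul, kill_X_of_notMem hi.1, kill_X_of_notMem hi.2,
    kill_X_of_notMem hj.1, kill_X_of_notMem hj.2]

lemma kill_minor_of_mem_left {i : V} (j : V) (hx : .inl i ∈ A) (hy : .inr i ∈ A) :
    kill R A (minor R i j) = 0 := by
  simp [minor, kill_X_of_mem hx, kill_X_of_mem hy]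

lemma FullOrFree.kill_minor {i j : V} (hi : FullOrFree A i) (hj : FullOrFree A j) :
    kill R A (minor R i j) = 0 ∨ kill R A (minor R i j) = minor R i j := by
  unfold FullOrFree at hi hj
  by_cases hxi : .inl i ∈ A
  · exact .inl (kill_minor_of_mem_left j hxi (hi.1 hxi))
  by_cases hxj : .inl j ∈ A
  · rw [minor_swap, map_neg, kill_minor_of_mem_left i hxj (hj.1 hxj), neg_zero]
    exact .inl rfl
  · exact .inr (kill_minor_of_freeAt ⟨hxi, mt hi.2 hxi⟩ ⟨hxj, mt hj.2 hxj⟩)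

variable {B : Finset (V ⊕ V)}

lemma minorIdeal_le_comap_kill
    (hr : ∀ i j, r i j → i ≠ j → FullOrFree B i ∧ FullOrFree B j) :
    minorIdeal R A r ≤ (minorIdeal R A r).comap (kill R B) := by
  refine minorIdeal_le_iff.2 ⟨fun a ha => ?_, fun i j hij => ?_⟩ <;> rw [Ideal.mem_comap]
  · by_cases hb : a ∈ B
    · simp [kill_X_of_mem hb]
    · simpa [kill_X_of_notMem hb] using X_mem_minorIdeal ha
  · obtain rfl | hne := eq_or_ne i j
    · simp [minor_self]
    obtain ⟨hi, hj⟩ := hr i j hij hne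
    rcases hi.kill_minor (R := R) hj with h | h <;> rw [h]
    exacts [zero_mem _, minor_mem_minorIdeal hij]

lemma minorIdeal_eq_inf {C : Finset (V ⊕ V)} {q : V → V → Prop}
    (hr : ∀ i j, r i j → i ≠ j → FullOrFree B i ∧ FullOrFree B j)
    (hC : Disjoint C B) (hq : ∀ i j, q i j → FreeAt B i ∧ FreeAt B j)
    (hBC : ∀ b ∈ B, ∀ a ∈ C, X b * X a ∈ minorIdeal R A r)
    (hBq : ∀ b ∈ B, ∀ i j, q i j → X b * minor R i j ∈ minorIdeal R A r) :
    minorIdeal R A r =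
      minorIdeal R (A ∪ C) (fun i j => r i j ∨ q i j) ⊓ minorIdeal R (A ∪ B) r := by
  rw [← minorIdeal_sup, ← minorIdeal_sup_span_X B]
  refine eq_inf_of_kill (minorIdeal_le_comap_kill hr) ?_ ?_
  · rintro _ (⟨a, ha, rfl⟩ | ⟨i, j, hij, rfl⟩)
    exacts [kill_X_of_notMem (Finset.disjoint_left.1 hC ha),
      kill_minor_of_freeAt (hq i j hij).1 (hq i j hij).2]
  · rintro b hb _ (⟨a, ha, rfl⟩ | ⟨i, j, hij, rfl⟩)
    exacts [hBC b hb a ha, hBq b hb i j hij]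

/-- The vertex `i` is outside `T` and, up to the variables in `A`, adjacent to every vertex of `T`
in the graph of the relation `r`. -/
def IsCommonNeighbor (A : Finset (V ⊕ V)) (r : V → V → Prop) (T : Finset V) (i : V) : Prop :=
  i ∉ T ∧ ∀ v ∈ T, MinorCovered A r v i

instance [DecidableRel r] (T : Finset V) (i : V) : Decidable (IsCommonNeighbor A r T i) :=
  inferInstanceAs (Decidable (_ ∧ _))

/- By the Plücker relations, the variables of `T` annihilate the minors of common neighbours. -/
lemma minorIdeal_eq_inf_of_isCommonNeighbor (T : Finset V)
    (hr : ∀ i j, r i j → MinorCovered A r' i j)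
    (hr' : ∀ i j, r' i j → MinorCovered A r i j ∨
      IsCommonNeighbor A r T i ∧ IsCommonNeighbor A r T j) :
    minorIdeal R A r = minorIdeal R A r' ⊓ minorIdeal R (A ∪ T.disjSum T) r := by
  rw [minorIdeal_eq_inf (B := T.disjSum T) (C := ∅) (q := fun i j => r' i j ∧
    IsCommonNeighbor A r T i ∧ IsCommonNeighbor A r T j), Finset.union_empty]
  · congr 1
    refine minorIdeal_congr (fun i j h => h.elim (hr i j) fun h => .inr (.inl h.1)) fun i j h => ?_
    have := hr' i j h
    simp only [MinorCovered] at this ⊢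
    grind
  · simp [FullOrFree]
  · simp
  · simp +contextual [FreeAt, IsCommonNeighbor]
  · simp
  · rintro b hb i j ⟨-, hi, hj⟩
    obtain ⟨v, hv, hb⟩ : ∃ v ∈ T, b = .inl v ∨ b = .inr v := by
      rcases b with v | v <;> simpa using hb
    exact X_mul_minor_mem_minorIdeal (hi.2 v hv) (hj.2 v hv) hb

end MinorIdeal

section MonomialMap

variable {R σ τ : Type*} [CommRing R]

lemma aeval_monomial_monomial (e : σ → τ →₀ ℕ) (m : σ →₀ ℕ) (r : R) :
    aeval (fun a => monomial (e a) (1 : R)) (monomial m r) =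
      monomial (Finsupp.linearCombination ℕ e m) r := by
  rw [aeval_monomial, Finsupp.prod, Finsupp.linearCombination_apply, Finsupp.sum]
  simp only [monomial_pow, one_pow]
  rw [← monomial_sum_one, algebraMap_eq, C_mul_monomial, mul_one]

/- Choosing a preimage of every exponent vector in the image gives a linear section of the
monomial map, up to `J`. -/
lemma mem_of_aeval_monomial_eq_zero (e : σ → τ →₀ ℕ) {J : Ideal (MvPolynomial σ R)}
    (hJ : ∀ m m', Finsupp.linearCombination ℕ e m = Finsupp.linearCombination ℕ e m' →
      monomial m 1 - monomial m' 1 ∈ J)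
    {p : MvPolynomial σ R} (hp : aeval (fun a => monomial (e a) (1 : R)) p = 0) : p ∈ J := by
  set E : (σ →₀ ℕ) → (τ →₀ ℕ) := fun m => Finsupp.linearCombination ℕ e m
  let L : MvPolynomial τ R →ₗ[R] MvPolynomial σ R :=
    (basisMonomials τ R).constr R fun d => monomial (Function.invFun E d) 1
  have hL (d : τ →₀ ℕ) (r : R) : L (monomial d r) = monomial (Function.invFun E d) r := by
    have h : monomial d r = r • basisMonomials τ R d := by simp [smul_monomial]
    rw [h, map_smul, Module.Basis.constr_basis, smul_monomial, smul_eq_mul, mul_one]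
  have hsection (q : MvPolynomial σ R) :
      L (aeval (fun a => monomial (e a) (1 : R)) q) - q ∈ J := by
    induction q using MvPolynomial.induction_on' with
    | monomial m r =>
      have h := J.mul_mem_left (C r)
        (hJ (Function.invFun E (E m)) m (Function.invFun_eq (f := E) ⟨m, rfl⟩))
      rw [aeval_monomial_monomial, hL]
      simpa [mul_sub, C_mul_monomial] using h
    | add p q hp hq =>
      rw [map_add, map_add, add_sub_add_comm]
      exact add_mem hp hq
  have h := hsection p
  rw [hp, map_zero, zero_sub] at h
  exact neg_mem_iff.1 h

end MonomialMap

section ToricPrime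

variable {R V ι : Type*} [CommRing R] {c : V → ι}

/-- The exponents of the monomials `u_i s_{c i}` and `u_i t_{c i}`, the images of `x_i` and `y_i`
under `toricMap`. -/
def toricExp (c : V → ι) : V ⊕ V → (V ⊕ (ι ⊕ ι)) →₀ ℕ :=
  Sum.elim (fun i => .single (.inl i) 1 + .single (.inr (.inl (c i))) 1)
    (fun i => .single (.inl i) 1 + .single (.inr (.inr (c i))) 1)

/-- The map `x_i ↦ u_i s_{c i}`, `y_i ↦ u_i t_{c i}`, whose kernel is generated by the minors of the
pairs of vertices of the same colour. -/
def toricMap (R : Type*) [CommRing R] (c : V → ι) :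
    MvPolynomial (V ⊕ V) R →ₐ[R] MvPolynomial (V ⊕ (ι ⊕ ι)) R :=
  aeval fun a => monomial (toricExp c a) 1

lemma toricMap_inl (i : V) :
    toricMap R c (X (.inl i)) = X (.inl i) * X (.inr (.inl (c i))) := by
  rw [toricMap, aeval_X]
  simp [toricExp, X, monomial_mul]

lemma toricMap_inr (i : V) :
    toricMap R c (X (.inr i)) = X (.inl i) * X (.inr (.inr (c i))) := by
  rw [toricMap, aeval_X]
  simp [toricExp, X, monomial_mul]

lemma toricMap_minor (i j : V) : toricMap R c (minor R i j) =
    X (.inl i) * X (.inl j) * (X (.inr (.inl (c i))) * X (.inr (.inr (c j))) -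
      X (.inr (.inl (c j))) * X (.inr (.inr (c i)))) := by
  simp only [minor, map_sub, map_mul, toricMap_inl, toricMap_inr]
  ring

lemma monomial_sub_monomial_swap (w : (V ⊕ V) →₀ ℕ) (i j : V) :
    (monomial (w + .single (.inl i) 1 + .single (.inr j) 1) 1 -
      monomial (w + .single (.inl j) 1 + .single (.inr i) 1) 1 : MvPolynomial (V ⊕ V) R) =
      monomial w 1 * minor R i j := by
  simp [minor, X, mul_sub, monomial_mul, add_assoc]

lemma linearCombination_toricExp_swap (w : (V ⊕ V) →₀ ℕ) {i j : V} (hij : c i = c j) :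
    Finsupp.linearCombination ℕ (toricExp c) (w + .single (.inl j) 1 + .single (.inr i) 1) =
      Finsupp.linearCombination ℕ (toricExp c) (w + .single (.inl i) 1 + .single (.inr j) 1) := by
  simp only [map_add, Finsupp.linearCombination_single, one_smul, toricExp, Sum.elim_inl,
    Sum.elim_inr, hij]
  abel

lemma exists_lt_of_sum_eq_of_ne {α : Type*} {s : Finset α} {f g : α → ℕ}
    (h : ∑ a ∈ s, f a = ∑ a ∈ s, g a) {a : α} (ha : a ∈ s) (hne : f a ≠ g a) :
    ∃ b ∈ s, f b < g b := by
  by_contra! hle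
  exact hne ((Finset.sum_eq_sum_iff_of_le hle).1 h.symm a ha).symm

lemma linearCombination_toricExp_inr_inl [Fintype V] [DecidableEq ι]
    (m : (V ⊕ V) →₀ ℕ) (k : ι) :
    Finsupp.linearCombination ℕ (toricExp c) m (.inr (.inl k)) =
      ∑ i with c i = k, m (.inl i) := by
  classical
  simp [Finsupp.linearCombination_apply, Finsupp.sum_fintype, toricExp, Finsupp.single_apply,
    Finset.sum_filter]

variable [Finite V]

lemma linearCombination_toricExp_inl (m : (V ⊕ V) →₀ ℕ) (i : V) :
    Finsupp.linearCombination ℕ (toricExp c) m (.inl i) = m (.inl i) + m (.inr i) := by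
  classical
  have := Fintype.ofFinite V
  simp [Finsupp.linearCombination_apply, Finsupp.sum_fintype, toricExp, Finsupp.single_apply]

lemma exists_lt_of_linearCombination_toricExp_eq {m m' : (V ⊕ V) →₀ ℕ} (hne : m ≠ m')
    (h : Finsupp.linearCombination ℕ (toricExp c) m = Finsupp.linearCombination ℕ (toricExp c) m') :
    ∃ i j, c i = c j ∧ m' (.inl i) < m (.inl i) ∧ m (.inl j) < m' (.inl j) := by
  classical
  have := Fintype.ofFinite V
  have hinl (i : V) : m (.inl i) + m (.inr i) = m' (.inl i) + m' (.inr i) := by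
    rw [← linearCombination_toricExp_inl (c := c), h, linearCombination_toricExp_inl]
  obtain ⟨k, hk⟩ : ∃ k, m (.inl k) ≠ m' (.inl k) := by
    by_contra! heq
    refine hne (Finsupp.ext ?_)
    rintro (i | i)
    · exact heq i
    · exact Nat.add_left_cancel ((hinl i).trans (by rw [heq]))
  have hsum : ∑ i with c i = c k, m (.inl i) = ∑ i with c i = c k, m' (.inl i) := by
    rw [← linearCombination_toricExp_inr_inl (c := c), h, linearCombination_toricExp_inr_inl]
  have hmem : k ∈ ({i | c i = c k} : Finset V) := by simp
  obtain ⟨i, hi, him⟩ := exists_lt_of_sum_eq_of_ne hsum.symm hmem hk.symm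
  obtain ⟨j, hj, hjm⟩ := exists_lt_of_sum_eq_of_ne hsum hmem hk
  exact ⟨i, j, (Finset.mem_filter.1 hi).2.trans (Finset.mem_filter.1 hj).2.symm, him, hjm⟩

/- Swapping `x_i y_j` for `x_j y_i`, with `i` and `j` of the same colour, brings the first monomial
closer to the second one. -/
lemma monomial_sub_monomial_mem {m m' : (V ⊕ V) →₀ ℕ}
    (h : Finsupp.linearCombination ℕ (toricExp c) m = Finsupp.linearCombination ℕ (toricExp c) m') :
    (monomial m 1 - monomial m' 1 : MvPolynomial (V ⊕ V) R) ∈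
      minorIdeal R ∅ (fun i j => c i = c j) := by
  have := Fintype.ofFinite V
  induction hd : ∑ i, (m (.inl i) - m' (.inl i)) using Nat.strong_induction_on generalizing m with
  | _ d ih =>
    obtain rfl | hne := eq_or_ne m m'
    · simp
    obtain ⟨i, j, hc, hi, hj⟩ := exists_lt_of_linearCombination_toricExp_eq hne h
    have hij : i ≠ j := fun hij => by subst hij; exact hi.not_gt hj
    have hjr : m (.inr j) ≠ 0 := by
      have := congr($h (.inl j))
      simp only [linearCombination_toricExp_inl] at this
      lia
    obtain ⟨w, rfl⟩ : ∃ w, m = w + .single (.inl i) 1 + .single (.inr j) 1 := by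
      have hle : (.single (.inl i) 1 + .single (.inr j) 1 : (V ⊕ V) →₀ ℕ) ≤ m := by
        classical
        rintro (k | k) <;> simp only [Finsupp.add_apply, Finsupp.single_apply] <;> grind
      exact ⟨_, by rw [add_assoc, tsub_add_cancel_of_le hle]⟩
    rw [← sub_add_sub_cancel _ (monomial (w + .single (.inl j) 1 + .single (.inr i) 1) 1),
      monomial_sub_monomial_swap]
    refine add_mem (Ideal.mul_mem_left _ _ (minor_mem_minorIdeal hc)) (ih _ ?_
      ((linearCombination_toricExp_swap w hc).trans h) rfl)
    rw [← hd]
    simp only [Finsupp.add_apply, ne_eq, reduceCtorEq, not_false_eq_true,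
      Finsupp.single_eq_of_ne, add_zero, Finsupp.single_eq_same] at hi hj ⊢
    refine Finset.sum_lt_sum (fun k _ => ?_) ⟨i, Finset.mem_univ i, ?_⟩
    · classical
      simp only [Finsupp.single_apply, Sum.inl.injEq]
      grind
    · simp [Finsupp.single_eq_of_ne, hij]
      lia

lemma minorIdeal_empty_eq_ker :
    minorIdeal R ∅ (fun i j => c i = c j) = RingHom.ker (toricMap R c) := by
  refine le_antisymm (minorIdeal_le_iff.2 ⟨by simp, fun i j hij => ?_⟩) fun p hp => ?_
  · rw [RingHom.mem_ker, toricMap_minor, hij]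
    ring
  · exact mem_of_aeval_monomial_eq_zero (toricExp c) (fun m m' => monomial_sub_monomial_mem) hp

/-- A vertex one of whose variables lies in `A` is the only vertex of its colour. -/
def Isolated (A : Finset (V ⊕ V)) (c : V → ι) : Prop :=
  ∀ i j, c i = c j → i ≠ j → FreeAt A i

variable {A : Finset (V ⊕ V)}

instance [Fintype V] [DecidableEq V] [DecidableEq ι] : Decidable (Isolated A c) :=
  inferInstanceAs (Decidable (∀ _ _, _ → _ → FreeAt _ _))

lemma minorIdeal_eq_ker [DecidableEq V] (h : Isolated A c) :
    minorIdeal R A (fun i j => c i = c j) = RingHom.ker ((toricMap R c).comp (kill R A)) := by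
  refine le_antisymm (minorIdeal_le_iff.2 ⟨fun a ha => ?_, fun i j hij => ?_⟩) fun p hp => ?_
  · simp [RingHom.mem_ker, kill_X_of_mem ha]
  · obtain rfl | hne := eq_or_ne i j
    · simp [minor_self]
    rw [RingHom.mem_ker, AlgHom.comp_apply,
      kill_minor_of_freeAt (h i j hij hne) (h j i hij.symm hne.symm), toricMap_minor, hij]
    ring
  · have hkill : kill R A p ∈ minorIdeal R A (fun i j => c i = c j) := by
      refine minorIdeal_mono (Finset.empty_subset A) (r := fun i j => c i = c j)
        (fun i j h => .inr (.inl h)) ?_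
      rw [minorIdeal_empty_eq_ker]
      exact hp
    rw [← sub_add_cancel p (kill R A p)]
    exact add_mem (sub_kill_mem (fun a ha => X_mem_minorIdeal ha) p) hkill

variable [IsDomain R]

lemma Isolated.isPrime (h : Isolated A c) : (minorIdeal R A (fun i j => c i = c j)).IsPrime := by
  classical
  rw [minorIdeal_eq_ker h]
  exact RingHom.ker_isPrime _

lemma Isolated.X_notMem (h : Isolated A c) {a : V ⊕ V} (ha : a ∉ A) :
    X a ∉ minorIdeal R A (fun i j => c i = c j) := by
  classical
  rw [minorIdeal_eq_ker h, RingHom.mem_ker, AlgHom.comp_apply, kill_X_of_notMem ha]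
  rcases a with i | i
  · simp [toricMap_inl]
  · simp [toricMap_inr]

lemma Isolated.minor_notMem (h : Isolated A c) {i j : V} (hij : c i ≠ c j) (hi : FreeAt A i)
    (hj : FreeAt A j) : minor R i j ∉ minorIdeal R A (fun i j => c i = c j) := by
  classical
  rw [minorIdeal_eq_ker h, RingHom.mem_ker, AlgHom.comp_apply, kill_minor_of_freeAt hi hj,
    toricMap_minor]
  intro hzero
  have := congr(eval (Sum.elim (fun _ => 1) (Sum.elim (Pi.single (c i) 1)
    (Pi.single (c j) 1)) : V ⊕ (ι ⊕ ι) → R) $hzero)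
  simp [hij, hij.symm] at this

end ToricPrime

section Isolate

variable {R V ι : Type*} [CommRing R] [DecidableEq V] {A : Finset (V ⊕ V)} {c : V → ι}

/-- The colouring obtained from `c` by giving every vertex in `U` a new colour of its own. -/
def isolate (c : V → ι) (U : Finset V) (k : V) : V ⊕ ι := if k ∈ U then .inl k else .inr (c k)

lemma isolate_eq_isolate_iff {U : Finset V} {i j : V} :
    isolate c U i = isolate c U j ↔ i = j ∨ i ∉ U ∧ j ∉ U ∧ c i = c j := by
  unfold isolate
  split_ifs with hi hj hj
  · simp [hi]
  · simp [hi, ne_of_mem_of_not_mem hi hj]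
  · simp [hj, (ne_of_mem_of_not_mem hj hi).symm]
  · simp only [Sum.inr.injEq, hi, hj, not_false_eq_true, true_and]
    exact ⟨.inr, fun h => h.elim (congrArg c) id⟩

lemma card_image_isolate [Fintype V] [DecidableEq ι] (U : Finset V) :
    (Finset.univ.image (isolate c U)).card = U.card + (Uᶜ.image c).card := by
  rw [← Finset.card_disjSum]
  congr 1
  ext (k | k) <;> simp [isolate, ite_eq_iff]

lemma Isolated.isolate_of_freeAt {A' : Finset (V ⊕ V)} {U : Finset V} (h : Isolated A c)
    (hA : ∀ i ∉ U, FreeAt A i → FreeAt A' i) : Isolated A' (isolate c U) := by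
  intro i j hij hne
  obtain ⟨hi, -, hc⟩ := (isolate_eq_isolate_iff.1 hij).resolve_left hne
  exact hA i hi (h i j hc hne)

lemma Isolated.isolate_pair (h : Isolated A c) (i : V) :
    Isolated (A ∪ {.inl i, .inr i}) (isolate c {i}) :=
  h.isolate_of_freeAt fun j hj => by simp +contextual [FreeAt] at hj ⊢; tauto

lemma minorIdeal_isolate {U : Finset V}
    (hU : ∀ i ∈ U, ∀ j, c i = c j → MinorCovered A (fun _ _ => False) i j) :
    minorIdeal R A (fun i j => c i = c j) =
      minorIdeal R A (fun i j => isolate c U i = isolate c U j) := by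
  refine minorIdeal_congr (fun i j hij => ?_) fun i j hij => ?_
  · have hi := hU i
    have hj := hU j
    simp only [MinorCovered, isolate_eq_isolate_iff] at hi hj ⊢
    grind
  · rcases isolate_eq_isolate_iff.1 hij with h | ⟨-, -, h⟩
    exacts [.inl h, .inr (.inl h)]

lemma card_union_pair {i : V} (h : FreeAt A i) :
    (A ∪ {.inl i, .inr i}).card = A.card + 2 := by
  rw [Finset.card_union_of_disjoint (Finset.disjoint_right.2 (by simpa [FreeAt] using h)),
    Finset.card_pair (by simp)]

end Isolate

section Height

variable {R : Type*} [CommRing R]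

lemma htI_eq_height {P : Ideal R} [hP : P.IsPrime] : htI P = P.height := by
  rw [(⟨P, hP⟩ : PrimeSpectrum R).height_eq_orderHeight]
  exact le_antisymm (iInf₂_le (⟨P, hP⟩ : PrimeSpectrum R) le_rfl)
    (le_iInf₂ fun Q hQ => Order.height_mono hQ)

lemma htI_add_ringKrullDim_quotient_le (I : Ideal R) :
    htI I + ringKrullDim (R ⧸ I) ≤ ringKrullDim R := by
  rw [ringKrullDim_quotient]
  cases isEmpty_or_nonempty (PrimeSpectrum.zeroLocus (I : Set R)) with
  | inl h => rw [Order.krullDim_eq_bot, WithBot.add_bot]; exact bot_le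
  | inr h =>
    have : Nonempty (PrimeSpectrum R) := ⟨h.some.1⟩
    rw [ringKrullDim, Order.krullDim_eq_iSup_coheight_of_nonempty,
      Order.krullDim_eq_iSup_height_add_coheight_of_nonempty, ← WithBot.coe_add, ENat.add_iSup,
      WithBot.coe_le_coe]
    refine iSup_le fun P => le_iSup_of_le P.1 (add_le_add ?_ ?_)
    · exact iInf₂_le P.1 P.2
    · exact Order.coheight_le_coheight_apply_of_strictMono Subtype.val (Subtype.strictMono_coe _) P

lemma eq_and_eq_of_add_le {a : ℕ∞} {b : WithBot ℕ∞} {d n : ℕ} (ha : d ≤ a) (hb : n ≤ b)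
    (h : a + b ≤ (d + n : ℕ)) : a = d ∧ b = n := by
  induction b with
  | bot => simp at hb
  | coe b =>
    norm_cast at hb h ⊢
    lift a to ℕ using ne_top_of_le_ne_top (ENat.natCast_ne_top _) (le_self_add.trans h)
    lift b to ℕ using ne_top_of_le_ne_top (ENat.natCast_ne_top _) (le_add_self.trans h)
    norm_cast at *
    lia

end Height

section ToricInvariants

universe u v

variable {R : Type u} {V ι : Type v} [CommRing R] [Fintype V] [DecidableEq ι] {c : V → ι}

/-- The vertices of the same colour as `i`. -/
def colorClass (c : V → ι) (i : V) : Finset V := {k | c k = c i}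

@[simp] lemma mem_colorClass {i k : V} : k ∈ colorClass c i ↔ c k = c i := by simp [colorClass]

variable {A : Finset (V ⊕ V)} {n : ℕ}

section DecidableEq

variable [DecidableEq V]

lemma minorIdeal_insert_inl_eq_inf (i : V) :
    minorIdeal R (insert (.inl i) A) (fun j k => c j = c k) =
      minorIdeal R (A ∪ Finset.image .inl (colorClass c i))
        (fun j k => isolate c (colorClass c i) j = isolate c (colorClass c i) k) ⊓
      minorIdeal R (A ∪ {.inl i, .inr i}) (fun j k => isolate c {i} j = isolate c {i} k) := by
  rw [← minorIdeal_isolate, ← minorIdeal_isolate, minorIdeal_eq_inf (B := {.inl i, .inr i})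
    (C := Finset.image .inl ((colorClass c i).erase i)) (q := fun _ _ => False)]
  · congr 2
    · grind [mem_colorClass]
    · simp
    · grind [mem_colorClass]
  · simp [FullOrFree]
  · rw [Finset.disjoint_left]
    grind [mem_colorClass]
  · simp
  · intro b hb a ha
    obtain ⟨k, hk, rfl⟩ := Finset.mem_image.1 ha
    have hX : X (.inl i) ∈ minorIdeal R (insert (.inl i) A) (fun j k => c j = c k) :=
      X_mem_minorIdeal (by simp)
    obtain rfl | rfl : b = .inl i ∨ b = .inr i := by simpa using hb
    · exact Ideal.mul_mem_right _ _ hX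
    · have hminor : minor R k i ∈ minorIdeal R (insert (.inl i) A) (fun j k => c j = c k) :=
        minor_mem_minorIdeal (by simp_all)
      rw [show X (.inr i) * X (.inl k) = minor R k i + X (.inl i) * X (.inr k) by
        rw [minor]; ring]
      exact add_mem hminor (Ideal.mul_mem_right _ _ hX)
  · simp
  · simp [MinorCovered]
  · simp +contextual [MinorCovered]

lemma minorIdeal_insert_inl_sup (i : V) :
    minorIdeal R (A ∪ Finset.image .inl (colorClass c i))
        (fun j k => isolate c (colorClass c i) j = isolate c (colorClass c i) k) ⊔
      minorIdeal R (A ∪ {.inl i, .inr i}) (fun j k => isolate c {i} j = isolate c {i} k) =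
    minorIdeal R (A ∪ Finset.image .inl (colorClass c i))
        (fun j k => isolate c (colorClass c i) j = isolate c (colorClass c i) k) ⊔
      Ideal.span {X (.inr i)} := by
  rw [minorIdeal_sup, minorIdeal_sup_span_X_singleton]
  have hA : A ∪ Finset.image .inl (colorClass c i) ∪ (A ∪ {.inl i, .inr i}) =
    insert (.inr i) (A ∪ Finset.image .inl (colorClass c i)) := by grind [mem_colorClass]
  rw [hA]
  refine minorIdeal_congr (fun j k h => ?_) fun j k h => .inr (.inl (.inl h))
  simp only [isolate_eq_isolate_iff, MinorCovered] at h ⊢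
  grind [mem_colorClass]

lemma Isolated.isolate_class (h : Isolated A c) (i : V) :
    Isolated (A ∪ Finset.image .inl (colorClass c i)) (isolate c (colorClass c i)) :=
  h.isolate_of_freeAt fun j hj => by simp_all [FreeAt]

lemma card_colors_isolate_singleton {i j : V} (hij : i ≠ j) (h : c i = c j) :
    (Finset.univ.image (isolate c {i})).card = (Finset.univ.image c).card + 1 := by
  rw [card_image_isolate, Finset.card_singleton, add_comm]
  congr 2
  ext a
  simp only [Finset.mem_image, Finset.mem_compl, Finset.mem_singleton, Finset.mem_univ, true_and]
  grind [mem_colorClass]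

lemma card_colors_isolate_class (i : V) :
    (Finset.univ.image (isolate c (colorClass c i))).card + 1 =
      (Finset.univ.image c).card + (colorClass c i).card := by
  have himage : Finset.image c (colorClass c i)ᶜ =
      (Finset.univ.image c).erase (c i) := by
    ext a
    simp only [Finset.mem_image, Finset.mem_compl, Finset.mem_erase,
      Finset.mem_univ, true_and]
    grind [mem_colorClass]
  have hcard := Finset.card_erase_add_one (Finset.mem_image_of_mem c (Finset.mem_univ i))
  rw [card_image_isolate, himage]
  lia

lemma Isolated.card_union_class (h : Isolated A c) {i j : V} (hne : i ≠ j) (hij : c i = c j) :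
    (A ∪ Finset.image .inl (colorClass c i)).card = A.card + (colorClass c i).card := by
  rw [Finset.card_union_of_disjoint, Finset.card_image_of_injective _ Sum.inl_injective]
  refine Finset.disjoint_right.2 fun a ha => ?_
  obtain ⟨k, hk, rfl⟩ := Finset.mem_image.1 ha
  rw [mem_colorClass] at hk
  obtain rfl | hki := eq_or_ne k i
  exacts [(h k j hij hne).1, (h k i hk hki).1]

lemma exists_isolated_insert_or_exists_eq
    (hA : A.card < Fintype.card V + (Finset.univ.image c).card) :
    (∃ a ∉ A, Isolated (insert a A) c) ∨ ∃ i j, i ≠ j ∧ c i = c j := by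
  by_cases hinj : Function.Injective c
  · have hcard : A.card < Fintype.card (V ⊕ V) := by
      rwa [Finset.card_image_of_injective _ hinj, Finset.card_univ, ← Fintype.card_sum] at hA
    obtain ⟨a, ha⟩ : ∃ a, a ∉ A := by
      by_contra! hall
      rw [Finset.eq_univ_of_forall hall, Finset.card_univ] at hcard
      exact hcard.false
    exact .inl ⟨a, ha, fun i j hij hne => absurd (hinj hij) hne⟩
  · obtain ⟨i, j, hij, hne⟩ : ∃ i j, c i = c j ∧ i ≠ j := by
      simpa [Function.Injective] using hinj
    exact .inr ⟨i, j, hne, hij⟩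

end DecidableEq

variable [IsDomain R]

/- Dropping a variable of `A`, or isolating a vertex when `A` is empty, gives a smaller prime. -/
lemma Isolated.le_height (h : Isolated A c)
    (hn : n + (Finset.univ.image c).card ≤ A.card + Fintype.card V) :
    n ≤ (minorIdeal R A (fun i j => c i = c j)).height := by
  classical
  induction n generalizing A ι with
  | zero => simp
  | succ n ih =>
    have := h.isPrime (R := R)
    suffices ∃ P : Ideal (MvPolynomial (V ⊕ V) R), P.IsPrime ∧ n ≤ P.height ∧
        P < minorIdeal R A (fun i j => c i = c j) by
      obtain ⟨P, hP, hle, hlt⟩ := this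
      calc ((n + 1 : ℕ) : ℕ∞) ≤ P.height + 1 := by push_cast; gcongr
        _ ≤ _ := Ideal.height_add_one_le_of_lt_of_isPrime hlt
    obtain rfl | ⟨a, ha⟩ := A.eq_empty_or_nonempty
    · obtain ⟨i, j, hij, hne⟩ : ∃ i j, c i = c j ∧ i ≠ j := by
        by_contra! hinj
        rw [Finset.card_image_of_injective _ hinj, Finset.card_univ] at hn
        simp at hn
      have hcard := card_colors_isolate_singleton hne hij
      have hiso : Isolated ∅ (isolate c {i}) := fun _ _ _ _ => by simp [FreeAt]
      refine ⟨_, hiso.isPrime, ih hiso (by lia), SetLike.lt_iff_le_and_exists.2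
        ⟨minorIdeal_mono subset_rfl fun k l hkl => ?_, minor R i j, minor_mem_minorIdeal hij,
          hiso.minor_notMem ?_ (by simp [FreeAt]) (by simp [FreeAt])⟩⟩
      · rcases isolate_eq_isolate_iff.1 hkl with hkl | ⟨-, -, hkl⟩
        exacts [.inl hkl, .inr (.inl hkl)]
      · simp [isolate_eq_isolate_iff, hne]
    · have hiso : Isolated (A.erase a) c := fun i j hij hne =>
        ⟨fun hi => (h i j hij hne).1 (Finset.mem_of_mem_erase hi),
          fun hi => (h i j hij hne).2 (Finset.mem_of_mem_erase hi)⟩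
      have hcard := Finset.card_erase_add_one ha
      exact ⟨_, hiso.isPrime, ih hiso (by lia), SetLike.lt_iff_le_and_exists.2
        ⟨minorIdeal_mono (Finset.erase_subset a A) fun k l hkl => .inr (.inl hkl), X a,
          X_mem_minorIdeal ha, hiso.X_notMem (Finset.notMem_erase a A)⟩⟩

/- If all vertices are isolated, add a variable. Otherwise `P + (x_i)`, for a vertex `i` which is
not isolated, is the intersection of two ideals `Q₁` and `Q₂` of the same kind, with
`Q₁ + Q₂ = Q₁ + (y_i)`. -/
lemma Isolated.extVanish (h : Isolated A c)
    (hn : n + A.card = Fintype.card V + (Finset.univ.image c).card) :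
    ExtVanish (idealOfVars (V ⊕ V) R)
      (MvPolynomial (V ⊕ V) R ⧸ minorIdeal R A (fun i j => c i = c j)) n := by
  classical
  induction n generalizing A ι with
  | zero => exact .zero
  | succ n ih =>
    have hregular {a : V ⊕ V} (ha : a ∉ A) :
        IsSMulRegular (MvPolynomial (V ⊕ V) R ⧸ minorIdeal R A (fun i j => c i = c j))
          (X a : MvPolynomial (V ⊕ V) R) :=
      have := h.isPrime (R := R)
      isSMulRegular_quotient_of_isPrime (h.X_notMem ha)
    rcases exists_isolated_insert_or_exists_eq (A := A) (c := c) (by lia) with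
      ⟨a, ha, hiso⟩ | ⟨i, j, hne, hij⟩
    · rw [← extVanish_sup_span_singleton_iff (X_mem_idealOfVars a) (hregular ha),
        minorIdeal_sup_span_X_singleton]
      exact ih hiso (by rw [Finset.card_insert_of_notMem ha]; lia)
    rw [← extVanish_sup_span_singleton_iff (X_mem_idealOfVars _) (hregular (h i j hij hne).1),
      minorIdeal_sup_span_X_singleton, minorIdeal_insert_inl_eq_inf]
    have hiso := h.isolate_class i
    have hcard := card_colors_isolate_class (c := c) i
    have hcard' := card_colors_isolate_singleton hne hij
    have hQ := ih hiso (by rw [h.card_union_class hne hij]; lia)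
    rcases n with _ | n
    · exact .zero
    refine .inf hQ (ih (h.isolate_pair i) ?_) ?_
    · rw [card_union_pair (h i j hij hne)]
      lia
    · rw [minorIdeal_insert_inl_sup]
      have := hiso.isPrime (R := R)
      have hy := hiso.X_notMem (R := R) (a := .inr i) (by simpa using (h i j hij hne).2)
      exact (extVanish_sup_span_singleton_iff (X_mem_idealOfVars _)
        (isSMulRegular_quotient_of_isPrime hy)).2 hQ

variable {K : Type u} [Field K]

lemma Isolated.height_eq_and_ringKrullDim_eq {d : ℕ} (h : Isolated A c)
    (hd : d + (Finset.univ.image c).card = A.card + Fintype.card V)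
    (hn : n + A.card = Fintype.card V + (Finset.univ.image c).card) :
    (minorIdeal K A (fun i j => c i = c j)).height = d ∧
      ringKrullDim (MvPolynomial (V ⊕ V) K ⧸ minorIdeal K A (fun i j => c i = c j)) = n := by
  have := h.isPrime (R := K)
  have hheight := h.le_height (R := K) hd.le
  have hdim := (h.extVanish (R := K) hn).le_ringKrullDim_quotient minorIdeal_le_idealOfVars
    idealOfVars_ne_top
  have hle := htI_add_ringKrullDim_quotient_le (minorIdeal K A (fun i j => c i = c j))
  have hcard : Nat.card (V ⊕ V) = d + n := by rw [Nat.card_eq_fintype_card, Fintype.card_sum]; lia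
  rw [htI_eq_height, MvPolynomial.ringKrullDim_of_isNoetherianRing, ringKrullDim_eq_zero_of_field,
    zero_add, hcard] at hle
  exact eq_and_eq_of_add_le hheight hdim hle

lemma Isolated.extVanish_iff {m : ℕ} (h : Isolated A c)
    (hn : n + A.card = Fintype.card V + (Finset.univ.image c).card) :
    ExtVanish (idealOfVars (V ⊕ V) K)
      (MvPolynomial (V ⊕ V) K ⧸ minorIdeal K A (fun i j => c i = c j)) m ↔ m ≤ n := by
  refine ⟨fun hm => ?_, (h.extVanish hn).mono⟩
  have hle := hm.le_ringKrullDim_quotient minorIdeal_le_idealOfVars idealOfVars_ne_top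
  have hcolors : (Finset.univ.image c).card ≤ Fintype.card V := Finset.card_image_le
  rw [(h.height_eq_and_ringKrullDim_eq (d := A.card + Fintype.card V -
    (Finset.univ.image c).card) (by lia) hn).2] at hle
  exact_mod_cast hle

end ToricInvariants

section Pendant

variable {R V ι : Type*} [CommRing R] {A : Finset (V ⊕ V)} {c : V → ι}
  {k l k' l' : V} {n : ℕ}

/-- The edge `kl` can be attached to the coloured vertices as a pendant edge at `k`: the vertex `l`
is the only one of its colour, and `A` does not involve the two vertices. -/
structure IsPendant (A : Finset (V ⊕ V)) (c : V → ι) (k l : V) : Prop where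
  ne : k ≠ l
  eq_of_color_eq : ∀ j, c l = c j → l = j
  freeAt_left : FreeAt A k
  freeAt_right : FreeAt A l

instance [Fintype V] [DecidableEq V] [DecidableEq ι] : Decidable (IsPendant A c k l) :=
  decidable_of_iff (k ≠ l ∧ (∀ j, c l = c j → l = j) ∧ FreeAt A k ∧ FreeAt A l)
    ⟨fun h => ⟨h.1, h.2.1, h.2.2.1, h.2.2.2⟩, fun h => ⟨h.1, h.2, h.3, h.4⟩⟩

/- The edge `kl` either merges `l` with the colour class of `k`, or the vertex `k` disappears. -/
lemma IsPendant.minorIdeal_eq_inf [DecidableEq V] (h : IsPendant A c k l) :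
    minorIdeal R A (fun i j => c i = c j ∨ i = k ∧ j = l) =
      minorIdeal R A (fun i j => Function.update c l (c k) i = Function.update c l (c k) j) ⊓
      minorIdeal R (A ∪ {.inl k, .inr k}) (fun i j => isolate c {k} i = isolate c {k} j) := by
  have hl := h.eq_of_color_eq
  have hne := h.ne
  have hk : ({k} : Finset V).disjSum {k} = {.inl k, .inr k} := rfl
  rw [minorIdeal_eq_inf_of_isCommonNeighbor {k}
    (r' := fun i j => Function.update c l (c k) i = Function.update c l (c k) j), hk]
  · congr 1
    refine minorIdeal_congr (fun i j hij => ?_) fun i j hij => ?_ <;>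
      simp only [isolate_eq_isolate_iff, MinorCovered] at hij ⊢ <;> grind
  · simp only [Function.update_apply, MinorCovered]
    grind
  · simp only [Function.update_apply, MinorCovered, IsCommonNeighbor]
    grind

lemma Isolated.update [DecidableEq V] (hA : Isolated A c) (h : IsPendant A c k l) :
    Isolated A (Function.update c l (c k)) := by
  intro i j hij hne
  have hk := h.freeAt_left
  have hl := h.freeAt_right
  have hA := hA i
  simp only [Function.update_apply] at hij
  grind

variable [Finite V] [IsDomain R]

lemma IsPendant.isSMulRegular_minor (hA : Isolated A c) (h : IsPendant A c k l) :
    IsSMulRegular (MvPolynomial (V ⊕ V) R ⧸ minorIdeal R A (fun i j => c i = c j))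
      (minor R k l) := by
  have := hA.isPrime (R := R)
  exact isSMulRegular_quotient_of_isPrime (hA.minor_notMem
    (fun hkl => h.ne (h.eq_of_color_eq k hkl.symm).symm) h.freeAt_left h.freeAt_right)

lemma IsPendant.isSMulRegular_minor_of_isPendant (hA : Isolated A c)
    (h : IsPendant A c k l) (h' : IsPendant A c k' l') (hkk : k ≠ k') (hkl : k ≠ l')
    (hll : l ≠ l') :
    IsSMulRegular
      (MvPolynomial (V ⊕ V) R ⧸ minorIdeal R A (fun i j => c i = c j ∨ i = k ∧ j = l))
      (minor R k' l') := by
  classical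
  have hA₁ := hA.update h
  have hA₂ := hA.isolate_pair k
  have := hA₁.isPrime (R := R)
  have := hA₂.isPrime (R := R)
  have hl := h'.eq_of_color_eq
  have hne := h'.ne
  rw [h.minorIdeal_eq_inf]
  refine isSMulRegular_quotient_inf
    (isSMulRegular_quotient_of_isPrime (hA₁.minor_notMem ?_ h'.freeAt_left h'.freeAt_right))
    (isSMulRegular_quotient_of_isPrime (hA₂.minor_notMem ?_ ?_ ?_))
  · simp only [Function.update_apply]
    grind
  · simp only [ne_eq, isolate_eq_isolate_iff]
    grind
  · simpa [FreeAt, hkk.symm] using h'.freeAt_left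
  · simpa [FreeAt, hkl.symm] using h'.freeAt_right

/- The minors of two disjoint pendant edges form a regular sequence. -/
lemma extVanish_two_pendants_iff (hA : Isolated A c) (h : IsPendant A c k l)
    (h' : IsPendant A c k' l') (hkk : k ≠ k') (hkl : k ≠ l') (hll : l ≠ l') :
    ExtVanish (idealOfVars (V ⊕ V) R) (MvPolynomial (V ⊕ V) R ⧸
      minorIdeal R A (fun i j => (c i = c j ∨ i = k ∧ j = l) ∨ i = k' ∧ j = l')) n ↔
    ExtVanish (idealOfVars (V ⊕ V) R) (MvPolynomial (V ⊕ V) R ⧸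
      minorIdeal R A (fun i j => c i = c j)) (n + 2) := by
  rw [← minorIdeal_sup_span_minor, extVanish_sup_span_singleton_iff (minor_mem_idealOfVars k' l')
    (h.isSMulRegular_minor_of_isPendant hA h' hkk hkl hll), ← minorIdeal_sup_span_minor,
    extVanish_sup_span_singleton_iff (minor_mem_idealOfVars k l) (h.isSMulRegular_minor hA)]

end Pendant

section Generators

variable {R σ : Type*} [CommRing R] {d : ℕ}

lemma homogeneousComponent_mul_of_mem_pow_idealOfVars (g : MvPolynomial σ R)
    {f : MvPolynomial σ R} (hf : f ∈ idealOfVars σ R ^ d) :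
    homogeneousComponent d (g * f) = constantCoeff g • homogeneousComponent d f := by
  have hg : g - C (constantCoeff g) ∈ idealOfVars σ R ^ 1 := by
    rw [mem_pow_idealOfVars_iff']
    intro u hu
    rw [Nat.lt_one_iff, Finsupp.degree_eq_zero_iff] at hu
    simp [hu, constantCoeff_eq]
  have hmem : (g - C (constantCoeff g)) * f ∈ idealOfVars σ R ^ (1 + d) := by
    rw [pow_add]
    exact Ideal.mul_mem_mul hg hf
  have hzero : homogeneousComponent d ((g - C (constantCoeff g)) * f) = 0 := by
    ext u
    rw [coeff_homogeneousComponent, coeff_zero]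
    split_ifs with hu
    · exact (mem_pow_idealOfVars_iff' _ _).1 hmem u (by lia)
    · rfl
  rw [sub_mul, map_sub, homogeneousComponent_C_mul, ← smul_eq_C_mul] at hzero
  exact sub_eq_zero.1 hzero

lemma homogeneousComponent_mem_span_image {S : Set (MvPolynomial σ R)}
    (hS : Ideal.span S ≤ idealOfVars σ R ^ d) {g : MvPolynomial σ R} (hg : g ∈ Ideal.span S) :
    homogeneousComponent d g ∈ Submodule.span R (homogeneousComponent d '' S) := by
  induction hg using Submodule.span_induction with
  | mem f hf => exact Submodule.subset_span (Set.mem_image_of_mem _ hf)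
  | zero => simp
  | add f g _ _ hf hg => rw [map_add]; exact add_mem hf hg
  | smul a f hf ih =>
    rw [smul_eq_mul, homogeneousComponent_mul_of_mem_pow_idealOfVars a (hS hf)]
    exact Submodule.smul_mem _ _ ih

lemma mem_pow_idealOfVars_of_isHomogeneous {f : MvPolynomial σ R} (hf : f.IsHomogeneous d) :
    f ∈ idealOfVars σ R ^ d := by
  rw [mem_pow_idealOfVars_iff']
  intro u hu
  exact hf.coeff_eq_zero hu.ne

variable {α : Type*} [Fintype α] {f : α → MvPolynomial σ R}

lemma mu_span_range [Nontrivial R] (hf : ∀ k, (f k).IsHomogeneous d)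
    (hind : LinearIndependent R f) : mu (Ideal.span (Set.range f)) = Fintype.card α := by
  classical
  have himage : (Finset.univ.image f).card = Fintype.card α := by
    rw [Finset.card_image_of_injective _ hind.injective, Finset.card_univ]
  refine le_antisymm (Nat.sInf_le ⟨Finset.univ.image f, himage, by simp⟩)
    (le_csInf ⟨_, Finset.univ.image f, himage, by simp⟩ ?_)
  rintro _ ⟨s, rfl, hs⟩
  have hle : Ideal.span (s : Set (MvPolynomial σ R)) ≤ idealOfVars σ R ^ d := by
    rw [hs, Ideal.span_le]
    rintro _ ⟨k, rfl⟩
    exact mem_pow_idealOfVars_of_isHomogeneous (hf k)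
  have hrange : Set.range f ≤
      Submodule.span R (s.image (homogeneousComponent d) : Set (MvPolynomial σ R)) := by
    rintro _ ⟨k, rfl⟩
    rw [← homogeneousComponent_eq_self (hf k), Finset.coe_image]
    exact homogeneousComponent_mem_span_image hle (hs ▸ Ideal.subset_span ⟨k, rfl⟩)
  calc Fintype.card α ≤ Fintype.card ↥(s.image (homogeneousComponent d)) :=
        linearIndependent_le_span_aux' f hind _ hrange
    _ = (s.image (homogeneousComponent d)).card := Fintype.card_coe _
    _ ≤ s.card := Finset.card_image_le

end Generators

section EdgeMinors

variable {R V : Type*} [CommRing R]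

lemma isHomogeneous_minor (i j : V) : (minor R i j).IsHomogeneous 2 :=
  ((isHomogeneous_X R _).mul (isHomogeneous_X R _)).sub
    ((isHomogeneous_X R _).mul (isHomogeneous_X R _))

lemma coeff_minor [DecidableEq V] (a b i j : V) :
    coeff (.single (.inl i) 1 + .single (.inr j) 1) (minor R a b) =
      (if a = i ∧ b = j then 1 else 0) - if b = i ∧ a = j then 1 else 0 := by
  have hX (a b : V) : coeff (.single (.inl i) 1 + .single (.inr j) 1)
      (X (.inl a) * X (.inr b) : MvPolynomial (V ⊕ V) R) = if a = i ∧ b = j then 1 else 0 := by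
    rw [X, X, monomial_mul, one_mul, coeff_monomial]
    refine if_congr ⟨fun h => ⟨?_, ?_⟩, by rintro ⟨rfl, rfl⟩; rfl⟩ rfl rfl
    · simpa [Finsupp.single_apply] using DFunLike.congr_fun h (.inl i)
    · simpa [Finsupp.single_apply] using DFunLike.congr_fun h (.inr j)
  rw [minor, coeff_sub, hX, hX]

variable {G : SimpleGraph V}

lemma mk_out_eq (e : Sym2 V) : s(e.out.1, e.out.2) = e := Quot.out_eq e

lemma adj_out (e : G.edgeSet) : G.Adj e.1.out.1 e.1.out.2 := by
  rw [← SimpleGraph.mem_edgeSet, mk_out_eq]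
  exact e.2

lemma linearIndependent_minor_edge :
    LinearIndependent R fun e : G.edgeSet => minor R e.1.out.1 e.1.out.2 := by
  classical
  have hcoeff (e e' : G.edgeSet) :
      coeff (.single (.inl e'.1.out.1) 1 + .single (.inr e'.1.out.2) 1)
        (minor R e.1.out.1 e.1.out.2) = if e = e' then 1 else 0 := by
    have heq : e = e' ↔ e.1.out.1 = e'.1.out.1 ∧ e.1.out.2 = e'.1.out.2 ∨
        e.1.out.1 = e'.1.out.2 ∧ e.1.out.2 = e'.1.out.1 := by
      rw [Subtype.ext_iff, ← mk_out_eq e.1, ← mk_out_eq e'.1, Sym2.eq_iff, mk_out_eq, mk_out_eq]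
    have hne := (adj_out e).ne
    rw [coeff_minor]
    grind
  refine linearIndependent_iff'.2 fun s g hg e he => ?_
  simpa [coeff_sum, hcoeff, he] using
    congr(coeff (.single (.inl e.1.out.1) 1 + .single (.inr e.1.out.2) 1) $hg)

lemma binomialEdgeIdeal_eq_span_range (K : Type*) [Field K] : binomialEdgeIdeal K G =
    Ideal.span (Set.range fun e : G.edgeSet => minor K e.1.out.1 e.1.out.2) := by
  refine le_antisymm (Ideal.span_le.2 ?_) (Ideal.span_le.2 ?_)
  · rintro _ ⟨i, j, hij, rfl⟩
    have hmem : minor K s(i, j).out.1 s(i, j).out.2 ∈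
        Ideal.span (Set.range fun e : G.edgeSet => minor K e.1.out.1 e.1.out.2) :=
      Ideal.subset_span ⟨⟨s(i, j), hij⟩, rfl⟩
    rcases Sym2.eq_iff.1 (mk_out_eq s(i, j)) with ⟨hi, hj⟩ | ⟨hi, hj⟩
    · rwa [hi, hj] at hmem
    · rwa [hi, hj, minor_swap, neg_mem_iff] at hmem
  · rintro _ ⟨e, rfl⟩
    exact Ideal.subset_span ⟨_, _, adj_out e, rfl⟩

lemma mu_binomialEdgeIdeal (K : Type*) [Field K] [Fintype G.edgeSet] :
    mu (binomialEdgeIdeal K G) = G.edgeFinset.card := by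
  rw [binomialEdgeIdeal_eq_span_range, mu_span_range (fun _ => isHomogeneous_minor _ _)
    linearIndependent_minor_edge, SimpleGraph.edgeFinset_card]

end EdgeMinors

section Components

variable {V ι : Type*} {G : SimpleGraph V} {T : Finset V} {c : V → ι}

/-- The labelling `c` separates the connected components of `G - T` from each other and from the
vertices in `T`, each of which has a label of its own. -/
structure IsComponentLabeling (G : SimpleGraph V) (T : Finset V) (c : V → ι) : Prop where
  eq_iff_reachable : ∀ (i j : V) (hi : i ∈ (T : Set V)ᶜ) (hj : j ∈ (T : Set V)ᶜ),
    c i = c j ↔ (G.induce (T : Set V)ᶜ).Reachable ⟨i, hi⟩ ⟨j, hj⟩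
  eq_of_mem : ∀ i ∈ T, ∀ j, c i = c j → i = j

lemma IsComponentLabeling.isolated (h : IsComponentLabeling G T c) :
    Isolated (T.disjSum T) c := by
  intro i j hij hne
  simpa [FreeAt] using fun hi => hne (h.eq_of_mem i hi j hij)

lemma IsComponentLabeling.card_image [Fintype V] [DecidableEq ι] (h : IsComponentLabeling G T c) :
    (Finset.univ.image c).card =
      T.card + Nat.card (G.induce (T : Set V)ᶜ).ConnectedComponent := by
  classical
  let label : (G.induce (T : Set V)ᶜ).ConnectedComponent → ι :=
    SimpleGraph.ConnectedComponent.lift (fun v => c v)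
      fun v w p _ => (h.eq_iff_reachable v w v.2 w.2).2 p.reachable
  have hinj : Function.Injective label := by
    refine SimpleGraph.ConnectedComponent.ind₂ fun v w hvw => ?_
    exact SimpleGraph.ConnectedComponent.sound ((h.eq_iff_reachable v w v.2 w.2).1 hvw)
  have hrange : Set.range label = (Tᶜ.image c : Finset ι) := by
    ext a
    simp [label, SimpleGraph.ConnectedComponent.exists]
  have hdisj : Disjoint (T.image c) (Tᶜ.image c) := by
    simp only [Finset.disjoint_left, Finset.mem_image, Finset.mem_compl]
    rintro _ ⟨i, hi, rfl⟩ ⟨j, hj, hij⟩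
    exact hj (h.eq_of_mem i hi j hij.symm ▸ hi)
  rw [Nat.card_congr (Equiv.ofInjective label hinj), hrange, Nat.card_eq_fintype_card,
    ← Finset.card_image_of_injOn (s := T) (f := c) fun i hi j _ => h.eq_of_mem i hi j,
    ← Finset.union_compl T, Finset.image_union, Finset.card_union_of_disjoint hdisj]
  simp

variable [DecidableEq V]

/-- The component labelling of `G - T` computed from a list of the edges of `G`, by merging the
labels of the endpoints of one edge after the other. -/
def componentLabel (T : Finset V) : List (V × V) → V → V
  | [], v => v
  | (a, b) :: l, v =>
    if a ∉ T ∧ b ∉ T ∧ componentLabel T l v = componentLabel T l b then componentLabel T l a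
    else componentLabel T l v

variable {l : List (V × V)}

lemma componentLabel_eq_of_mem {a b : V} (h : (a, b) ∈ l) (ha : a ∉ T) (hb : b ∉ T) :
    componentLabel T l a = componentLabel T l b := by
  induction l with
  | nil => simp at h
  | cons e l ih =>
    rcases List.mem_cons.1 h with rfl | h
    · simp [componentLabel, ha, hb]
    · simp only [componentLabel, ih h]

lemma eq_of_componentLabel_eq {i j : V} (hi : i ∈ T)
    (h : componentLabel T l i = componentLabel T l j) : i = j := by
  induction l generalizing j with
  | nil => exact h
  | cons e l ih =>
    simp only [componentLabel] at h
    grind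

lemma reachable_of_componentLabel_eq (hl : ∀ e ∈ l, G.Adj e.1 e.2) {v w : V}
    (hv : v ∈ (T : Set V)ᶜ) (hw : w ∈ (T : Set V)ᶜ)
    (h : componentLabel T l v = componentLabel T l w) :
    (G.induce (T : Set V)ᶜ).Reachable ⟨v, hv⟩ ⟨w, hw⟩ := by
  induction l generalizing v w with
  | nil => subst h; rfl
  | cons e l ih =>
    obtain ⟨a, b⟩ := e
    rw [List.forall_mem_cons] at hl
    simp only [componentLabel] at h
    split_ifs at h with hvb hwb hwb
    · exact ih hl.2 hv hw (hvb.2.2.trans hwb.2.2.symm)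
    · have hba : (G.induce (T : Set V)ᶜ).Adj ⟨b, hvb.2.1⟩ ⟨a, hvb.1⟩ := hl.1.symm
      exact (ih hl.2 hv _ hvb.2.2).trans (hba.reachable.trans (ih hl.2 _ hw h))
    · have hab : (G.induce (T : Set V)ᶜ).Adj ⟨a, hwb.1⟩ ⟨b, hwb.2.1⟩ := hl.1
      exact (ih hl.2 hv _ h).trans (hab.reachable.trans (ih hl.2 _ hw hwb.2.2.symm))
    · exact ih hl.2 hv hw h

lemma isComponentLabeling_componentLabel (hl : ∀ a b, G.Adj a b ↔ (a, b) ∈ l ∨ (b, a) ∈ l) :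
    IsComponentLabeling G T (componentLabel T l) where
  eq_iff_reachable i j hi hj := by
    refine ⟨reachable_of_componentLabel_eq (fun e he => (hl _ _).2 (.inl he)) hi hj, ?_⟩
    suffices ∀ v w : ((T : Set V)ᶜ : Set V), (G.induce (T : Set V)ᶜ).Walk v w →
        componentLabel T l v = componentLabel T l w from fun ⟨p⟩ => this _ _ p
    intro v w p
    induction p with
    | nil => rfl
    | @cons u v _ h _ ih =>
      refine Eq.trans ?_ ih
      rcases (hl u v).1 h with h | h
      exacts [componentLabel_eq_of_mem h u.2 v.2, (componentLabel_eq_of_mem h v.2 u.2).symm]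
  eq_of_mem i hi j h := eq_of_componentLabel_eq hi h

end Components

lemma exists_isComponentLabeling {V : Type*} [Finite V] (G : SimpleGraph V) (T : Finset V) :
    ∃ c : V → V, IsComponentLabeling G T c := by
  classical
  have := Fintype.ofFinite V
  exact ⟨componentLabel T (Finset.univ.filter fun e : V × V => G.Adj e.1 e.2).toList,
    isComponentLabeling_componentLabel fun a b => by simp [G.adj_comm]⟩

section PrimeComponents

variable {K : Type*} [Field K] {n d m : ℕ} {G : SimpleGraph (Fin n)} {T : Finset (Fin n)}

lemma IsComponentLabeling.card_image_eq_add_cNum {ι : Type*} [DecidableEq ι] {c : Fin n → ι}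
    (h : IsComponentLabeling G T c) :
    (Finset.univ.image c).card = T.card + cNum G (T : Set (Fin n))ᶜ :=
  h.card_image

lemma IsComponentLabeling.PTIdeal_eq {ι : Type*} {c : Fin n → ι}
    (h : IsComponentLabeling G T c) :
    PTIdeal K G T = minorIdeal K (T.disjSum T) (fun i j => c i = c j) := by
  refine le_antisymm (Ideal.span_le.2 ?_) (minorIdeal_le_iff.2 ⟨?_, fun i j hij => ?_⟩)
  · rintro _ ((⟨i, hi, rfl⟩ | ⟨i, hi, rfl⟩) | ⟨i, j, hi, hj, -, hij, rfl⟩)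
    · exact X_mem_minorIdeal (Finset.inl_mem_disjSum.2 hi)
    · exact X_mem_minorIdeal (Finset.inr_mem_disjSum.2 hi)
    · exact minor_mem_minorIdeal ((h.eq_iff_reachable i j hi hj).2 hij)
  · rintro (i | i) hi
    · exact Ideal.subset_span (.inl (.inl ⟨i, Finset.inl_mem_disjSum.1 hi, rfl⟩))
    · exact Ideal.subset_span (.inl (.inr ⟨i, Finset.inr_mem_disjSum.1 hi, rfl⟩))
  · obtain rfl | hne := eq_or_ne i j
    · simp [minor_self]
    have hi : i ∈ (T : Set (Fin n))ᶜ := fun hi => hne (h.eq_of_mem i hi j hij)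
    have hj : j ∈ (T : Set (Fin n))ᶜ := fun hj => hne (h.eq_of_mem j hj i hij.symm).symm
    exact Ideal.subset_span
      (.inr ⟨i, j, hi, hj, hne, (h.eq_iff_reachable i j hi hj).1 hij, rfl⟩)

lemma isPrime_PTIdeal : (PTIdeal K G T).IsPrime := by
  obtain ⟨c, hc⟩ := exists_isComponentLabeling G T
  rw [hc.PTIdeal_eq]
  exact hc.isolated.isPrime

lemma extVanish_PTIdeal (hm : m + T.card = n + cNum G (T : Set (Fin n))ᶜ) :
    ExtVanish (idealOfVars (Fin n ⊕ Fin n) K) (MvPolynomial (Fin n ⊕ Fin n) K ⧸ PTIdeal K G T)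
      m := by
  obtain ⟨c, hc⟩ := exists_isComponentLabeling G T
  rw [hc.PTIdeal_eq]
  refine hc.isolated.extVanish ?_
  rw [hc.card_image_eq_add_cNum, Finset.card_disjSum, Fintype.card_fin]
  lia

lemma height_eq_and_ringKrullDim_eq_PTIdeal (hd : d + cNum G (T : Set (Fin n))ᶜ = n + T.card)
    (hm : m + T.card = n + cNum G (T : Set (Fin n))ᶜ) :
    (PTIdeal K G T).height = d ∧
      ringKrullDim (MvPolynomial (Fin n ⊕ Fin n) K ⧸ PTIdeal K G T) = m := by
  obtain ⟨c, hc⟩ := exists_isComponentLabeling G T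
  rw [hc.PTIdeal_eq]
  refine hc.isolated.height_eq_and_ringKrullDim_eq ?_ ?_ <;>
  · rw [hc.card_image_eq_add_cNum, Finset.card_disjSum, Fintype.card_fin]
    lia

lemma hasCutpointProperty_iff {ι : Type*} [DecidableEq ι] {c : Finset (Fin n) → Fin n → ι}
    (h : ∀ T, IsComponentLabeling G T (c T)) :
    HasCutpointProperty G T ↔ ∀ i ∈ T,
      (Finset.univ.image (c (T.erase i))).card + 1 < (Finset.univ.image (c T)).card := by
  refine forall₂_congr fun i hi => ?_
  have hcompl : (T : Set (Fin n))ᶜ ∪ {i} = ((T.erase i : Finset (Fin n)) : Set (Fin n))ᶜ := by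
    ext j
    by_cases hj : j = i <;> simp [hj]
  have hcard := Finset.card_erase_add_one hi
  rw [hcompl, (h _).card_image_eq_add_cNum, (h _).card_image_eq_add_cNum]
  lia

end PrimeComponents

section Unmixed

variable {R α : Type*} [CommRing R] {s : Finset α} {P : α → Ideal R} {h : ℕ∞}

lemma htI_mono {I J : Ideal R} (h : I ≤ J) : htI I ≤ htI J :=
  le_iInf₂ fun Q hQ => iInf₂_le Q (h.trans hQ)

lemma exists_eq_of_mem_minimalPrimes_finset_inf (hP : ∀ t ∈ s, (P t).IsPrime) {Q : Ideal R}
    (hQ : Q ∈ (s.inf P).minimalPrimes) : ∃ t ∈ s, Q = P t := by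
  obtain ⟨t, ht, hle⟩ := (Ideal.IsPrime.inf_le' hQ.1.1).1 hQ.1.2
  exact ⟨t, ht, (hQ.2 ⟨hP t ht, Finset.inf_le ht⟩ hle).antisymm hle⟩

lemma htI_finset_inf (hs : s.Nonempty) (hP : ∀ t ∈ s, (P t).IsPrime)
    (hh : ∀ t ∈ s, (P t).height = h) : htI (s.inf P) = h := by
  obtain ⟨t, ht⟩ := hs
  refine le_antisymm ?_ (le_iInf₂ fun Q hQ => ?_)
  · have := hP t ht
    rw [← hh t ht, ← htI_eq_height]
    exact htI_mono (Finset.inf_le ht)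
  · obtain ⟨t, ht, hle⟩ := (Ideal.IsPrime.inf_le' Q.2).1 hQ
    have := hP t ht
    rw [← hh t ht, ← htI_eq_height]
    exact iInf₂_le Q hle

lemma ringKrullDim_quotient_eq_of_htI_eq {I P : Ideal R} {d m : ℕ} (hI : htI I = d) (hIP : I ≤ P)
    (hP : ringKrullDim (R ⧸ P) = m) (hR : ringKrullDim R = (d + m : ℕ)) :
    ringKrullDim (R ⧸ I) = m := by
  have hle := ringKrullDim_le_of_surjective _ (Ideal.Quotient.factor_surjective hIP)
  have hadd := htI_add_ringKrullDim_quotient_le I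
  exact (eq_and_eq_of_add_le hI.ge (hP ▸ hle) (hR ▸ hadd)).2

lemma isUnmixed_finset_inf (hs : s.Nonempty) (hP : ∀ t ∈ s, (P t).IsPrime)
    (hh : ∀ t ∈ s, (P t).height = h) : IsUnmixed (s.inf P) := by
  intro Q hQ
  obtain ⟨t, ht, rfl⟩ := exists_eq_of_mem_minimalPrimes_finset_inf hP hQ
  have := hP t ht
  rw [htI_finset_inf hs hP hh, htI_eq_height, hh t ht]

end Unmixed

section Example

/-- The edges of `bipartiteExample`. -/
def exampleEdges : List (Fin 7 × Fin 7) :=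
  [(0, 1), (1, 2), (1, 4), (2, 3), (3, 4), (2, 5), (4, 5), (5, 6)]

lemma bipartiteExample_adj_iff (a b : Fin 7) : bipartiteExample.Adj a b ↔
    (a, b) ∈ exampleEdges ∨ (b, a) ∈ exampleEdges := by
  refine (SimpleGraph.fromRel_adj _ _ _).trans (and_iff_right_of_imp ?_)
  revert a b
  decide

lemma isComponentLabeling_bipartiteExample (T : Finset (Fin 7)) :
    IsComponentLabeling bipartiteExample T (componentLabel T exampleEdges) :=
  isComponentLabeling_componentLabel bipartiteExample_adj_iff

/-- The sets with the cutpoint property for `bipartiteExample`. -/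
def exampleCutSets : Finset (Finset (Fin 7)) := {∅, {1}, {5}, {1, 5}, {2, 4}, {1, 3, 5}}

lemma hasCutpointProperty_bipartiteExample_iff (T : Finset (Fin 7)) :
    HasCutpointProperty bipartiteExample T ↔ T ∈ exampleCutSets := by
  rw [hasCutpointProperty_iff isComponentLabeling_bipartiteExample]
  revert T
  decide +kernel

lemma setOf_hasCutpointProperty_bipartiteExample :
    {T : Set (Fin 7) | HasCutpointProperty bipartiteExample T} =
      {∅, {1}, {5}, {1, 5}, {2, 4}, {1, 3, 5}} := by
  have hcoe : {T : Set (Fin 7) | HasCutpointProperty bipartiteExample T} =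
      (fun T : Finset (Fin 7) => (T : Set (Fin 7))) '' exampleCutSets := by
    ext T
    lift T to Finset (Fin 7) using T.toFinite
    simp [hasCutpointProperty_bipartiteExample_iff]
  simp [hcoe, exampleCutSets, Set.image_insert_eq]

lemma cNum_bipartiteExample {T : Finset (Fin 7)} (hT : T ∈ exampleCutSets) :
    cNum bipartiteExample (T : Set (Fin 7))ᶜ = T.card + 1 := by
  have hcard : ∀ T ∈ exampleCutSets,
      (Finset.univ.image (componentLabel T exampleEdges)).card = T.card + (T.card + 1) := by
    decide +kernel
  rw [← Nat.add_right_inj (n := T.card), ← hcard T hT,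
    (isComponentLabeling_bipartiteExample T).card_image_eq_add_cNum]

/-- The edges of `bipartiteExample` and of the triangle `{1, 3, 5}`. -/
def triangulatedEdges : List (Fin 7 × Fin 7) := exampleEdges ++ [(1, 3), (1, 5), (3, 5)]

/-- The relation whose graph consists of the cliques on the colour classes of `c` and the two
pendant edges of `bipartiteExample`. -/
def PendantRel (c : Fin 7 → Fin 7) (i j : Fin 7) : Prop :=
  (c i = c j ∨ i = 1 ∧ j = 0) ∨ i = 5 ∧ j = 6

instance (c : Fin 7 → Fin 7) : DecidableRel (PendantRel c) :=
  fun _ _ => inferInstanceAs (Decidable (_ ∨ _))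

variable (K : Type*) [Field K]

lemma binomialEdgeIdeal_bipartiteExample : binomialEdgeIdeal K bipartiteExample =
    minorIdeal K ∅ (fun i j => (i, j) ∈ exampleEdges) := by
  have hG : binomialEdgeIdeal K bipartiteExample = minorIdeal K ∅ bipartiteExample.Adj := by
    simp [binomialEdgeIdeal, minorIdeal, minor, eq_comm]
  rw [hG]
  refine minorIdeal_congr (fun i j h => ?_) fun i j h => ?_
  · exact .inr (((bipartiteExample_adj_iff i j).1 h).imp_right .inl)
  · exact .inr (.inl ((bipartiteExample_adj_iff i j).2 (.inl h)))

lemma minorIdeal_eq_PTIdeal {T : Finset (Fin 7)} {r : Fin 7 → Fin 7 → Prop}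
    (hr : ∀ i j, r i j → MinorCovered (T.disjSum T)
      (fun i j => componentLabel T exampleEdges i = componentLabel T exampleEdges j) i j)
    (hr' : ∀ i j, componentLabel T exampleEdges i = componentLabel T exampleEdges j →
      MinorCovered (T.disjSum T) r i j) :
    minorIdeal K (T.disjSum T) r = PTIdeal K bipartiteExample T :=
  (minorIdeal_congr hr hr').trans (isComponentLabeling_bipartiteExample T).PTIdeal_eq.symm

lemma minorIdeal_eq_inf_PTIdeal {S T : Finset (Fin 7)} {r r' : Fin 7 → Fin 7 → Prop}
    (h : (∀ i j, r i j → MinorCovered (S.disjSum S) r' i j) ∧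
      ∀ i j, r' i j → MinorCovered (S.disjSum S) r i j ∨
        IsCommonNeighbor (S.disjSum S) r T i ∧ IsCommonNeighbor (S.disjSum S) r T j)
    (hU : (∀ i j, r i j → MinorCovered ((S ∪ T).disjSum (S ∪ T)) (fun i j =>
      componentLabel (S ∪ T) exampleEdges i = componentLabel (S ∪ T) exampleEdges j) i j) ∧
      ∀ i j, componentLabel (S ∪ T) exampleEdges i = componentLabel (S ∪ T) exampleEdges j →
      MinorCovered ((S ∪ T).disjSum (S ∪ T)) r i j) :
    minorIdeal K (S.disjSum S) r =
      minorIdeal K (S.disjSum S) r' ⊓ PTIdeal K bipartiteExample (S ∪ T : Finset (Fin 7)) := by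
  have hST : S.disjSum S ∪ T.disjSum T = (S ∪ T).disjSum (S ∪ T) := by
    ext (i | i) <;> simp
  rw [minorIdeal_eq_inf_of_isCommonNeighbor T h.1 h.2, hST, minorIdeal_eq_PTIdeal K hU.1 hU.2]

set_option synthInstance.maxSize 1000

lemma binomialEdgeIdeal_bipartiteExample_eq_inf : binomialEdgeIdeal K bipartiteExample =
    minorIdeal K ∅ (fun i j => (i, j) ∈ triangulatedEdges) ⊓
      PTIdeal K bipartiteExample ({2, 4} : Finset (Fin 7)) :=
  (binomialEdgeIdeal_bipartiteExample K).trans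
    (minorIdeal_eq_inf_PTIdeal K (S := ∅) (T := {2, 4}) (by decide +kernel) (by decide +kernel))

lemma minorIdeal_triangulatedEdges_eq_inf :
    minorIdeal K ∅ (fun i j => (i, j) ∈ triangulatedEdges) =
      minorIdeal K ∅ (PendantRel ![0, 1, 1, 1, 1, 1, 6]) ⊓
        PTIdeal K bipartiteExample ({1, 3, 5} : Finset (Fin 7)) :=
  minorIdeal_eq_inf_PTIdeal K (S := ∅) (T := {1, 3, 5}) (by decide +kernel) (by decide +kernel)

/- The two parts correspond to merging the pendant vertex `0` with the clique and to removing the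
vertex `1`. -/
lemma minorIdeal_pendantRel_eq_inf : minorIdeal K ∅ (PendantRel ![0, 1, 1, 1, 1, 1, 6]) =
    (PTIdeal K bipartiteExample (∅ : Finset (Fin 7)) ⊓
      PTIdeal K bipartiteExample ({5} : Finset (Fin 7))) ⊓
    (PTIdeal K bipartiteExample ({1} : Finset (Fin 7)) ⊓
      PTIdeal K bipartiteExample ({1, 5} : Finset (Fin 7))) := by
  have hsplit : minorIdeal K ∅ (PendantRel ![0, 1, 1, 1, 1, 1, 6]) =
      minorIdeal K ∅ (PendantRel ![0, 0, 0, 0, 0, 0, 6]) ⊓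
        minorIdeal K (Finset.disjSum {1} {1}) (PendantRel ![0, 1, 1, 1, 1, 1, 6]) :=
    minorIdeal_eq_inf_of_isCommonNeighbor {1} (by decide +kernel) (by decide +kernel)
  have hmerge : minorIdeal K ∅ (PendantRel ![0, 0, 0, 0, 0, 0, 6]) =
      minorIdeal K ∅ (fun _ _ => True) ⊓ PTIdeal K bipartiteExample ({5} : Finset (Fin 7)) :=
    minorIdeal_eq_inf_PTIdeal K (S := ∅) (T := {5}) (by decide +kernel) (by decide +kernel)
  have hremove : minorIdeal K (Finset.disjSum {1} {1}) (PendantRel ![0, 1, 1, 1, 1, 1, 6]) =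
      minorIdeal K (Finset.disjSum {1} {1}) (PendantRel ![0, 1, 2, 2, 2, 2, 2]) ⊓
        PTIdeal K bipartiteExample ({1, 5} : Finset (Fin 7)) :=
    minorIdeal_eq_inf_PTIdeal K (S := {1}) (T := {5}) (by decide +kernel) (by decide +kernel)
  have hclique : minorIdeal K ∅ (fun _ _ => True) =
      PTIdeal K bipartiteExample (∅ : Finset (Fin 7)) :=
    minorIdeal_eq_PTIdeal K (T := ∅) (by decide +kernel) (by decide +kernel)
  have hremoved : minorIdeal K (Finset.disjSum {1} {1}) (PendantRel ![0, 1, 2, 2, 2, 2, 2]) =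
      PTIdeal K bipartiteExample ({1} : Finset (Fin 7)) :=
    minorIdeal_eq_PTIdeal K (by decide +kernel) (by decide +kernel)
  rw [hsplit, hmerge, hremove, hclique, hremoved]

lemma binomialEdgeIdeal_bipartiteExample_eq_finset_inf :
    binomialEdgeIdeal K bipartiteExample =
      exampleCutSets.inf fun T => PTIdeal K bipartiteExample T := by
  rw [binomialEdgeIdeal_bipartiteExample_eq_inf, minorIdeal_triangulatedEdges_eq_inf,
    minorIdeal_pendantRel_eq_inf]
  simp only [exampleCutSets, Finset.inf_insert, Finset.inf_singleton]
  ac_rfl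

lemma height_eq_and_ringKrullDim_eq_of_mem {T : Finset (Fin 7)} (hT : T ∈ exampleCutSets) :
    (PTIdeal K bipartiteExample T).height = (6 : ℕ) ∧
      ringKrullDim (MvPolynomial (Fin 7 ⊕ Fin 7) K ⧸ PTIdeal K bipartiteExample T) = (8 : ℕ) := by
  have h := cNum_bipartiteExample hT
  exact height_eq_and_ringKrullDim_eq_PTIdeal (by lia) (by lia)

lemma extVanish_PTIdeal_bipartiteExample {T : Finset (Fin 7)} (hT : T ∈ exampleCutSets) :
    ExtVanish (idealOfVars (Fin 7 ⊕ Fin 7) K)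
      (MvPolynomial (Fin 7 ⊕ Fin 7) K ⧸ PTIdeal K bipartiteExample T) 8 := by
  have h := cNum_bipartiteExample hT
  exact extVanish_PTIdeal (by lia)

lemma extVanish_pendantRel_iff {A : Finset (Fin 7 ⊕ Fin 7)} {c : Fin 7 → Fin 7} {m n : ℕ}
    (hA : Isolated A c) (h : IsPendant A c 1 0) (h' : IsPendant A c 5 6)
    (hm : m + A.card = 7 + (Finset.univ.image c).card) :
    ExtVanish (idealOfVars (Fin 7 ⊕ Fin 7) K)
      (MvPolynomial (Fin 7 ⊕ Fin 7) K ⧸ minorIdeal K A (PendantRel c)) n ↔ n + 2 ≤ m := by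
  rw [← hA.extVanish_iff (K := K) (by simpa using hm)]
  exact extVanish_two_pendants_iff hA h h' (by decide) (by decide) (by decide)

lemma minorIdeal_sup_PTIdeal {T : Finset (Fin 7)} {r s : Fin 7 → Fin 7 → Prop}
    (hs : ∀ i j, r i j ∨ componentLabel T exampleEdges i = componentLabel T exampleEdges j →
      MinorCovered (T.disjSum T) s i j)
    (hs' : ∀ i j, s i j → MinorCovered (T.disjSum T) (fun i j => r i j ∨
      componentLabel T exampleEdges i = componentLabel T exampleEdges j) i j) :
    minorIdeal K ∅ r ⊔ PTIdeal K bipartiteExample T = minorIdeal K (T.disjSum T) s := by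
  rw [(isComponentLabeling_bipartiteExample T).PTIdeal_eq, minorIdeal_sup, Finset.empty_union]
  exact minorIdeal_congr hs hs'

lemma extVanish_minorIdeal_triangulatedEdges :
    ExtVanish (idealOfVars (Fin 7 ⊕ Fin 7) K) (MvPolynomial (Fin 7 ⊕ Fin 7) K ⧸
      minorIdeal K ∅ fun i j => (i, j) ∈ triangulatedEdges) 8 := by
  have hsup : minorIdeal K ∅ (PendantRel ![0, 1, 1, 1, 1, 1, 6]) ⊔
      PTIdeal K bipartiteExample ({1, 3, 5} : Finset (Fin 7)) =
      minorIdeal K (Finset.disjSum {1, 3, 5} {1, 3, 5}) (fun i j =>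
        (![0, 1, 2, 3, 2, 5, 6] : Fin 7 → Fin 7) i = ![0, 1, 2, 3, 2, 5, 6] j) :=
    minorIdeal_sup_PTIdeal K (by decide +kernel) (by decide +kernel)
  have hisolated : Isolated (Finset.disjSum {1, 3, 5} {1, 3, 5})
      (![0, 1, 2, 3, 2, 5, 6] : Fin 7 → Fin 7) := by
    decide +kernel
  have hpendant := extVanish_pendantRel_iff K (A := ∅) (c := ![0, 1, 1, 1, 1, 1, 6]) (m := 10)
    (n := 8) (by decide +kernel) (by decide +kernel) (by decide +kernel) (by decide +kernel)
  rw [minorIdeal_triangulatedEdges_eq_inf]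
  refine .inf (hpendant.2 le_rfl)
    (extVanish_PTIdeal_bipartiteExample K (by decide +kernel)) ?_
  rw [hsup]
  exact hisolated.extVanish (by decide +kernel)

lemma extVanish_minorIdeal_triangulatedEdges_sup_iff {n : ℕ} :
    ExtVanish (idealOfVars (Fin 7 ⊕ Fin 7) K) (MvPolynomial (Fin 7 ⊕ Fin 7) K ⧸
      ((minorIdeal K ∅ fun i j => (i, j) ∈ triangulatedEdges) ⊔
        PTIdeal K bipartiteExample ({2, 4} : Finset (Fin 7)))) n ↔ n ≤ 6 := by
  rw [minorIdeal_sup_PTIdeal K (s := PendantRel ![0, 1, 2, 1, 4, 1, 6]) (by decide +kernel)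
    (by decide +kernel), extVanish_pendantRel_iff K (m := 8) (by decide +kernel)
    (by decide +kernel) (by decide +kernel) (by decide +kernel)]
  lia

lemma ringDepth_quotient_binomialEdgeIdeal_bipartiteExample :
    ringDepth (MvPolynomial (Fin 7 ⊕ Fin 7) K ⧸ binomialEdgeIdeal K bipartiteExample)
      (gradedMaxQuot (binomialEdgeIdeal K bipartiteExample)) = 7 := by
  have htri := extVanish_minorIdeal_triangulatedEdges K
  have hPT := extVanish_PTIdeal_bipartiteExample K (T := {2, 4}) (by decide +kernel)
  refine ringDepth_quotient_eq (n := 7) ?_ idealOfVars_ne_top ?_ fun h => ?_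
  · rw [binomialEdgeIdeal_bipartiteExample]
    exact minorIdeal_le_idealOfVars
  · rw [binomialEdgeIdeal_bipartiteExample_eq_inf]
    exact .inf (htri.mono (by lia)) (hPT.mono (by lia))
      ((extVanish_minorIdeal_triangulatedEdges_sup_iff K).2 le_rfl)
  · rw [binomialEdgeIdeal_bipartiteExample_eq_inf] at h
    have := (extVanish_minorIdeal_triangulatedEdges_sup_iff K).1
      (h.sup (htri.mono (by lia)) (hPT.mono (by lia)))
    lia

lemma htI_binomialEdgeIdeal_bipartiteExample :
    htI (binomialEdgeIdeal K bipartiteExample) = (6 : ℕ) := by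
  rw [binomialEdgeIdeal_bipartiteExample_eq_finset_inf]
  exact htI_finset_inf ⟨∅, by decide⟩ (fun _ _ => isPrime_PTIdeal)
    fun _ hT => (height_eq_and_ringKrullDim_eq_of_mem K hT).1

lemma isUnmixed_binomialEdgeIdeal_bipartiteExample :
    IsUnmixed (binomialEdgeIdeal K bipartiteExample) := by
  rw [binomialEdgeIdeal_bipartiteExample_eq_finset_inf]
  exact isUnmixed_finset_inf ⟨∅, by decide⟩ (fun _ _ => isPrime_PTIdeal)
    fun _ hT => (height_eq_and_ringKrullDim_eq_of_mem K hT).1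

lemma ringKrullDim_quotient_binomialEdgeIdeal_bipartiteExample :
    ringKrullDim (MvPolynomial (Fin 7 ⊕ Fin 7) K ⧸ binomialEdgeIdeal K bipartiteExample) = 8 := by
  have hle : binomialEdgeIdeal K bipartiteExample ≤
      PTIdeal K bipartiteExample (∅ : Finset (Fin 7)) := by
    rw [binomialEdgeIdeal_bipartiteExample_eq_finset_inf]
    exact Finset.inf_le (by decide)
  refine ringKrullDim_quotient_eq_of_htI_eq (htI_binomialEdgeIdeal_bipartiteExample K) hle
    (height_eq_and_ringKrullDim_eq_of_mem K (by decide)).2 ?_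
  simp [MvPolynomial.ringKrullDim_of_isNoetherianRing, ringKrullDim_eq_zero_of_field]

instance : DecidableRel bipartiteExample.Adj := fun a b =>
  decidable_of_iff _ (bipartiteExample_adj_iff a b).symm

lemma mu_binomialEdgeIdeal_bipartiteExample : mu (binomialEdgeIdeal K bipartiteExample) = 8 := by
  rw [mu_binomialEdgeIdeal]
  decide +kernel

end Example

theorem bipartiteExample_unmixed_not_CM_general (K : Type*) [Field K] :
    {T : Set (Fin 7) | HasCutpointProperty bipartiteExample T} =
      ({∅, {1}, {5}, {1, 5}, {2, 4}, {1, 3, 5}} : Set (Set (Fin 7))) ∧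
    IsUnmixed (binomialEdgeIdeal K bipartiteExample) ∧
    (mu (binomialEdgeIdeal K bipartiteExample) : ℕ∞) =
      htI (binomialEdgeIdeal K bipartiteExample) + 2 ∧
    ringKrullDim (MvPolynomial (Fin 7 ⊕ Fin 7) K ⧸ binomialEdgeIdeal K bipartiteExample) = 8 ∧
    ringDepth (MvPolynomial (Fin 7 ⊕ Fin 7) K ⧸ binomialEdgeIdeal K bipartiteExample)
      (gradedMaxQuot (binomialEdgeIdeal K bipartiteExample)) = 7 ∧
    ¬ IsCMQuot (binomialEdgeIdeal K bipartiteExample) := by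
  have hdim := ringKrullDim_quotient_binomialEdgeIdeal_bipartiteExample K
  have hdepth := ringDepth_quotient_binomialEdgeIdeal_bipartiteExample K
  refine ⟨setOf_hasCutpointProperty_bipartiteExample,
    isUnmixed_binomialEdgeIdeal_bipartiteExample K, ?_, hdim, hdepth, ?_⟩
  · rw [mu_binomialEdgeIdeal_bipartiteExample, htI_binomialEdgeIdeal_bipartiteExample]
    norm_num
  · rw [IsCMQuot, hdim, hdepth]
    decide

/-- For the bipartite graph `G` above (over `K = ℚ`),
`𝒞(G) = {∅, {2}, {6}, {2,6}, {3,5}, {2,4,6}}`, the ideal `J_G` is unmixed of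
deviation `2`, `dim S/J_G = 8` and `depth S/J_G = 7`; in particular `S/J_G` is not
Cohen–Macaulay. -/
theorem bipartiteExample_unmixed_not_CM :
    {T : Set (Fin 7) | HasCutpointProperty bipartiteExample T} =
      ({∅, {1}, {5}, {1, 5}, {2, 4}, {1, 3, 5}} : Set (Set (Fin 7))) ∧
    IsUnmixed (binomialEdgeIdeal ℚ bipartiteExample) ∧
    (mu (binomialEdgeIdeal ℚ bipartiteExample) : ℕ∞) =
      htI (binomialEdgeIdeal ℚ bipartiteExample) + 2 ∧
    ringKrullDim (MvPolynomial (Fin 7 ⊕ Fin 7) ℚ ⧸ binomialEdgeIdeal ℚ bipartiteExample) = 8 ∧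
    ringDepth (MvPolynomial (Fin 7 ⊕ Fin 7) ℚ ⧸ binomialEdgeIdeal ℚ bipartiteExample)
      (gradedMaxQuot (binomialEdgeIdeal ℚ bipartiteExample)) = 7 ∧
    ¬ IsCMQuot (binomialEdgeIdeal ℚ bipartiteExample) :=
  bipartiteExample_unmixed_not_CM_general ℚ

end
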